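/- arXiv:1508.03182 — 2 statements merged into one kernel-verified Lean document; each statement's English description precedes it below -/
import Mathlib

section
/- Let (Ω, 𝒜, μ) be a measure space, p ∈ [1,∞), T a positive C₀-semigroup on L_p(μ) with generator A, and V : Ω → [0,∞] locally measurable. Then for every ε ∈ (0,1], the strong limit s-lim_{t→0+} T_{εV}(t) exists and equals the band projection P = s-lim_{t→0+} T_V(t). -/
open MeasureTheory Filter Topology ENNReal

noncomputable section

namespace Absorption

variable {E : Type*} [NormedAddCommGroup E] [NormedSpace ℝ E]

/-- A one-parameter semigroup of bounded operators (for nonnegative times). -/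
def IsSemigroup (T : ℝ → E →L[ℝ] E) : Prop :=
  T 0 = ContinuousLinearMap.id ℝ E ∧
    ∀ s t : ℝ, 0 ≤ s → 0 ≤ t → T (s + t) = (T s).comp (T t)

/-- A `C₀`-semigroup: a one-parameter semigroup which is strongly continuous on `[0, ∞)`. -/
def IsC0Semigroup (T : ℝ → E →L[ℝ] E) : Prop :=
  IsSemigroup T ∧ ∀ f : E, ContinuousOn (fun t => T t f) (Set.Ici (0 : ℝ))

/-- `(f, g)` belongs to the graph of the generator of the semigroup `T`. -/
def InGenerator (T : ℝ → E →L[ℝ] E) (f g : E) : Prop :=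
  Tendsto (fun t : ℝ => t⁻¹ • (T t f - f)) (𝓝[>] (0 : ℝ)) (𝓝 g)

variable {Ω : Type*} [MeasurableSpace Ω]

/-- A function into a measurable space is *locally measurable* (w.r.t. `μ`) if on every set of
finite measure it coincides a.e. with a measurable function. -/
def LocallyMeasurable {α : Type*} [MeasurableSpace α] (μ : Measure Ω) (V : Ω → α) : Prop :=
  ∀ B : Set Ω, MeasurableSet B → μ B < ∞ →
    ∃ g : Ω → α, Measurable g ∧ ∀ᵐ ω ∂(μ.restrict B), V ω = g ω

/-- A set is a local `μ`-null set if its intersection with every measurable set of finite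
measure is null. -/
def IsLocalNullSet (μ : Measure Ω) (N : Set Ω) : Prop :=
  ∀ B : Set Ω, MeasurableSet B → μ B < ∞ → μ (N ∩ B) = 0

/-- Positivity of a family of operators on `L_p` (for positive times). -/
def IsPositiveSG {p : ℝ≥0∞} {μ : Measure Ω} [Fact (1 ≤ p)]
    (T : ℝ → Lp ℝ p μ →L[ℝ] Lp ℝ p μ) : Prop :=
  ∀ t : ℝ, 0 ≤ t → ∀ f : Lp ℝ p μ, 0 ≤ f → 0 ≤ T t f

/-- A band projection on the Banach lattice `L_p(μ)`: an idempotent operator `P`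
with `0 ≤ P f ≤ f` for all `f ≥ 0`. -/
def IsBandProjection {p : ℝ≥0∞} {μ : Measure Ω} [Fact (1 ≤ p)]
    (P : Lp ℝ p μ →L[ℝ] Lp ℝ p μ) : Prop :=
  P.comp P = P ∧ ∀ f : Lp ℝ p μ, 0 ≤ f → 0 ≤ P f ∧ P f ≤ f

/-- `S = (e^{t(A−W)})_{t ≥ 0}`: `S` is the `C₀`-semigroup whose generator is `A - W`,
where `A` is the generator of `T` and the bounded function `W` acts by multiplication. -/
def IsPerturbedSG (μ : Measure Ω) (p : ℝ≥0∞) [Fact (1 ≤ p)]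
    (T S : ℝ → Lp ℝ p μ →L[ℝ] Lp ℝ p μ) (W : Ω → ℝ) : Prop :=
  IsC0Semigroup S ∧
    ∀ f g : Lp ℝ p μ, InGenerator S f g ↔
      ∃ g₀ : Lp ℝ p μ, InGenerator T f g₀ ∧
        ⇑g =ᵐ[μ] fun ω => g₀ ω - W ω * f ω

/-- Same as `IsPerturbedSG`, for semigroups acting on a subspace `F` of `L_p(μ)`. -/
def IsPerturbedSGSub (μ : Measure Ω) (p : ℝ≥0∞) [Fact (1 ≤ p)] (F : Submodule ℝ (Lp ℝ p μ))
    (T S : ℝ → F →L[ℝ] F) (W : Ω → ℝ) : Prop :=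
  IsC0Semigroup S ∧
    ∀ f g : F, InGenerator S f g ↔
      ∃ g₀ : F, InGenerator T f g₀ ∧
        ⇑(g : Lp ℝ p μ) =ᵐ[μ] fun ω => (g₀ : Lp ℝ p μ) ω - W ω * (f : Lp ℝ p μ) ω

/-- The truncation `V ∧ n` of `V : Ω → [0,∞]`, as a real-valued function. -/
def trunc (V : Ω → ℝ≥0∞) (n : ℕ) : Ω → ℝ := fun ω => (min (V ω) (n : ℝ≥0∞)).toReal

/-- The scalar multiple `ε V` of an absorption rate `V : Ω → [0,∞]`. -/
def smulRate (ε : ℝ) (V : Ω → ℝ≥0∞) : Ω → ℝ≥0∞ := fun ω => ENNReal.ofReal ε * V ω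

/-- The absorption rate `V - V ∧ n` (with value `∞` wherever `V = ∞`). -/
def resid (V : Ω → ℝ≥0∞) (n : ℕ) : Ω → ℝ≥0∞ := fun ω => V ω - min (V ω) (n : ℝ≥0∞)

/-- `TV` is the absorption semigroup `T_V` associated with the rate `V : Ω → [0,∞]`, i.e.
the strong limit `T_V(t) = s-lim_{n→∞} e^{t(A - V∧n)}` (for `t ≥ 0`). -/
def IsAbsorptionSG (μ : Measure Ω) (p : ℝ≥0∞) [Fact (1 ≤ p)]
    (T : ℝ → Lp ℝ p μ →L[ℝ] Lp ℝ p μ) (V : Ω → ℝ≥0∞)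
    (TV : ℝ → Lp ℝ p μ →L[ℝ] Lp ℝ p μ) : Prop :=
  ∃ S : ℕ → ℝ → Lp ℝ p μ →L[ℝ] Lp ℝ p μ,
    (∀ n, IsPerturbedSG μ p T (S n) (trunc V n)) ∧
    ∀ t : ℝ, 0 ≤ t → ∀ f, Tendsto (fun n => S n t f) atTop (𝓝 (TV t f))

/-- `V : Ω → [0,∞]` is `T`-admissible: `V` is locally measurable, the strong limits
`T_V(t) = s-lim_{n→∞} e^{t(A - V∧n)}` exist, and `T_V` is a `C₀`-semigroup. -/
def Admissible (μ : Measure Ω) (p : ℝ≥0∞) [Fact (1 ≤ p)]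
    (T : ℝ → Lp ℝ p μ →L[ℝ] Lp ℝ p μ) (V : Ω → ℝ≥0∞) : Prop :=
  LocallyMeasurable μ V ∧
  ∃ TV, IsAbsorptionSG μ p T V TV ∧ IsC0Semigroup TV

/-- The truncation `(V ∧ n) ∨ (−n)` of an extended-real-valued rate, as a real function. -/
def truncE (V : Ω → EReal) (n : ℕ) : Ω → ℝ :=
  fun ω => (max (min (V ω) (n : EReal)) (-(n : EReal))).toReal

/-- `TV` is the absorption semigroup `T_V` of an extended-real-valued rate `V`:
`T_V(t) = s-lim_{n→∞} e^{t(A - (V∧n)∨(−n))}` (for `t ≥ 0`). -/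
def IsAbsorptionSGE (μ : Measure Ω) (p : ℝ≥0∞) [Fact (1 ≤ p)]
    (T : ℝ → Lp ℝ p μ →L[ℝ] Lp ℝ p μ) (V : Ω → EReal)
    (TV : ℝ → Lp ℝ p μ →L[ℝ] Lp ℝ p μ) : Prop :=
  ∃ S : ℕ → ℝ → Lp ℝ p μ →L[ℝ] Lp ℝ p μ,
    (∀ n, IsPerturbedSG μ p T (S n) (truncE V n)) ∧
    ∀ t : ℝ, 0 ≤ t → ∀ f, Tendsto (fun n => S n t f) atTop (𝓝 (TV t f))

/-- `T`-admissibility for an extended-real-valued absorption rate `V`. -/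
def AdmissibleE (μ : Measure Ω) (p : ℝ≥0∞) [Fact (1 ≤ p)]
    (T : ℝ → Lp ℝ p μ →L[ℝ] Lp ℝ p μ) (V : Ω → EReal) : Prop :=
  LocallyMeasurable μ V ∧
  ∃ TV, IsAbsorptionSGE μ p T V TV ∧ IsC0Semigroup TV

end Absorption

open Absorption

/-!
On the positive cone the absorption semigroups satisfy `T_V ≤ T_{εV} ≤ T` and, comparing Duhamel
formulas, `T_{εV} ≤ (1 - ε) T + ε T_V`. Split `f = P f + (f - P f)`. On the range of `P` the
orbits of `T_V` and of `T` both tend to their initial value, hence so do those of `T_{εV}`. If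
`T_V(t) f → 0` as `t → 0+`, then `T_{εV}(t) f ≤ (1 - ε) f + o(1)`, and applying `T_{εV}(t)` gives
`T_{εV}(2t) f ≤ (1 - ε) T_{εV}(t) f + o(1)`; since `1 - ε < 1`, iterating this yields
`T_{εV}(t) f → 0`.
-/

namespace Absorption

section StrongConvergence

variable {X E F : Type*} [NormedAddCommGroup E] [NormedSpace ℝ E] [NormedAddCommGroup F]
  [NormedSpace ℝ F]

lemma tendsto_clm_apply_of_norm_le {l : Filter X} {K : X → E →L[ℝ] F} {f : X → E} {x : E} {y : F}
    {M : ℝ} (hM : ∀ᶠ a in l, ‖K a‖ ≤ M) (hK : Tendsto (fun a => K a x) l (𝓝 y))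
    (hf : Tendsto f l (𝓝 x)) : Tendsto (fun a => K a (f a)) l (𝓝 y) := by
  have hbound : Tendsto (fun a => M * ‖f a - x‖) l (𝓝 0) := by
    simpa using (tendsto_iff_norm_sub_tendsto_zero.1 hf).const_mul M
  have hdiff : Tendsto (fun a => K a (f a - x)) l (𝓝 0) :=
    squeeze_zero_norm' (hM.mono fun a ha => (K a).le_of_opNorm_le ha _) hbound
  simpa using hdiff.add hK

variable [CompleteSpace E]

lemma exists_norm_le_of_forall_tendsto {K : ℕ → E →L[ℝ] F} {L : E → F}
    (hK : ∀ x, Tendsto (fun n => K n x) atTop (𝓝 (L x))) : ∃ M, ∀ n, ‖K n‖ ≤ M :=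
  banach_steinhaus fun x =>
    (Metric.isBounded_range_of_tendsto _ (hK x)).exists_norm_le.imp fun _ hC n => hC _ ⟨n, rfl⟩

variable [TopologicalSpace X] {K : X → E →L[ℝ] F} {s : Set X}

lemma exists_norm_le_of_forall_continuousOn (hs : IsCompact s)
    (hK : ∀ x, ContinuousOn (fun a => K a x) s) : ∃ M, ∀ a ∈ s, ‖K a‖ ≤ M := by
  obtain ⟨M, hM⟩ := banach_steinhaus (g := fun a : s => K a) fun x =>
    (hs.exists_bound_of_continuousOn (hK x)).imp fun _ hC a => hC a a.2
  exact ⟨M, fun a ha => hM ⟨a, ha⟩⟩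

lemma continuousOn_clm_apply_of_isCompact (hs : IsCompact s)
    (hK : ∀ x, ContinuousOn (fun a => K a x) s) {f : X → E} (hf : ContinuousOn f s) :
    ContinuousOn (fun a => K a (f a)) s := by
  obtain ⟨M, hM⟩ := exists_norm_le_of_forall_continuousOn hs hK
  exact fun a ha => tendsto_clm_apply_of_norm_le (eventually_mem_nhdsWithin.mono hM)
    (hK (f a) a ha) (hf a ha)

end StrongConvergence

section Calculus

variable {E F : Type*} [NormedAddCommGroup E] [NormedSpace ℝ E] [NormedAddCommGroup F]
  [NormedSpace ℝ F]

lemma hasDerivWithinAt_Ioi_iff_tendsto_slope_zero {f : ℝ → E} {f' : E} {x : ℝ} :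
    HasDerivWithinAt f f' (Set.Ioi x) x ↔
      Tendsto (fun h : ℝ => h⁻¹ • (f (x + h) - f x)) (𝓝[>] 0) (𝓝 f') := by
  have hx : 𝓝[>] x = map (x + ·) (𝓝[>] 0) := by rw [map_add_left_nhdsGT, add_zero]
  rw [hasDerivWithinAt_iff_tendsto_slope' Set.self_notMem_Ioi, hx, tendsto_map'_iff]
  simp only [Function.comp_def, slope_def_module, add_sub_cancel_left]

lemma continuous_intervalIntegral_clm_apply [CompleteSpace E] {K : ℝ → E →L[ℝ] F} {a b : ℝ}
    (hab : a ≤ b) (hK : ∀ x, ContinuousOn (fun s => K s x) (Set.Icc a b)) :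
    Continuous fun x => ∫ s in a..b, K s x := by
  obtain ⟨M, hM⟩ := exists_norm_le_of_forall_continuousOn isCompact_Icc hK
  have hint (x : E) : IntervalIntegrable (fun s => K s x) volume a b :=
    (hK x).intervalIntegrable_of_Icc hab
  refine (LipschitzWith.of_dist_le' (K := M * |b - a|) fun x y => ?_).continuous
  rw [dist_eq_norm, dist_eq_norm, ← intervalIntegral.integral_sub (hint x) (hint y), mul_right_comm]
  refine intervalIntegral.norm_integral_le_of_norm_le_const fun s hs => ?_
  rw [Set.uIoc_of_le hab] at hs
  rw [← map_sub]
  exact (K s).le_of_opNorm_le (hM s (Set.Ioc_subset_Icc_self hs)) _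

lemma hasDerivWithinAt_Ici_integral [CompleteSpace E] {u : ℝ → E} {a b t : ℝ}
    (hu : ContinuousOn u (Set.Icc a b)) (ht : t ∈ Set.Ico a b) :
    HasDerivWithinAt (fun x => ∫ s in a..x, u s) (u t) (Set.Ici t) t := by
  have hsub : Set.Ioo t b ⊆ Set.Icc a b := fun s hs => ⟨ht.1.trans hs.1.le, hs.2.le⟩
  have hmem : Set.Ioo t b ∈ 𝓝[>] t := Ioo_mem_nhdsGT ht.2
  have hint : IntervalIntegrable u volume a t :=
    (hu.mono (Set.Icc_subset_Icc_right ht.2.le)).intervalIntegrable_of_Icc ht.1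
  have hmeas : StronglyMeasurableAtFilter u (𝓝[>] t) :=
    ⟨_, hmem, (hu.mono hsub).aestronglyMeasurable measurableSet_Ioo⟩
  exact intervalIntegral.integral_hasDerivWithinAt_right hint hmeas
    (((hu t (Set.Ico_subset_Icc_self ht)).mono hsub).mono_of_mem_nhdsWithin hmem)

lemma tendsto_inv_smul_integral_nhdsGT [CompleteSpace E] {u : ℝ → E} {a : ℝ}
    (hu : ContinuousOn u (Set.Ici a)) :
    Tendsto (fun h : ℝ => h⁻¹ • ∫ s in a..a + h, u s) (𝓝[>] 0) (𝓝 (u a)) := by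
  have hderiv : HasDerivWithinAt (fun x => ∫ s in a..x, u s) (u a) (Set.Ioi a) a :=
    (hasDerivWithinAt_Ici_integral (hu.mono Set.Icc_subset_Ici_self)
      (Set.left_mem_Ico.2 (lt_add_one a))).mono Set.Ioi_subset_Ici_self
  simpa using hasDerivWithinAt_Ioi_iff_tendsto_slope_zero.1 hderiv

lemma eq_zero_of_le_mul_integral {φ : ℝ → ℝ} {a b C : ℝ} (hφ : ContinuousOn φ (Set.Icc a b))
    (hφ0 : ∀ t ∈ Set.Icc a b, 0 ≤ φ t) (hle : ∀ t ∈ Set.Icc a b, φ t ≤ C * ∫ s in a..t, φ s) :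
    ∀ t ∈ Set.Icc a b, φ t = 0 := by
  intro t ht
  have hab : a ≤ b := ht.1.trans ht.2
  have hcont : ContinuousOn (fun t => ∫ s in a..t, φ s) (Set.Icc a b) := by
    rw [← Set.uIcc_of_le hab] at hφ ⊢
    exact intervalIntegral.continuousOn_primitive_interval hφ.integrableOn_uIcc
  have hgrowth : ∀ t ∈ Set.Ico a b, ‖φ t‖ ≤ C * ‖∫ s in a..t, φ s‖ := by
    intro t ht
    have htI := Set.Ico_subset_Icc_self ht
    rw [Real.norm_of_nonneg (hφ0 t htI), Real.norm_of_nonneg (intervalIntegral.integral_nonneg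
      ht.1 fun s hs => hφ0 s ⟨hs.1, hs.2.trans htI.2⟩)]
    exact hle t htI
  have hzero : ∫ s in a..t, φ s = 0 :=
    eq_zero_of_abs_deriv_le_mul_abs_self_of_eq_zero_right hcont
      (fun _ ht => hasDerivWithinAt_Ici_integral hφ ht) intervalIntegral.integral_same hgrowth t ht
  refine le_antisymm ?_ (hφ0 t ht)
  simpa only [hzero, mul_zero] using hle t ht

end Calculus

section Semigroup

variable {E : Type*} [NormedAddCommGroup E] [NormedSpace ℝ E]

lemma IsSemigroup.apply_add {T : ℝ → E →L[ℝ] E} (hT : IsSemigroup T) {s t : ℝ} (hs : 0 ≤ s)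
    (ht : 0 ≤ t) (f : E) : T (s + t) f = T s (T t f) := by
  rw [hT.2 s t hs ht, ContinuousLinearMap.comp_apply]

lemma IsSemigroup.apply_zero {T : ℝ → E →L[ℝ] E} (hT : IsSemigroup T) (f : E) : T 0 f = f := by
  rw [hT.1, ContinuousLinearMap.id_apply]

lemma IsSemigroup.of_tendsto [CompleteSpace E] {R : ℕ → ℝ → E →L[ℝ] E} {F : ℝ → E →L[ℝ] E}
    (hR : ∀ n, IsSemigroup (R n))
    (hlim : ∀ t, 0 ≤ t → ∀ f, Tendsto (fun n => R n t f) atTop (𝓝 (F t f))) : IsSemigroup F := by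
  constructor
  · ext f
    refine tendsto_nhds_unique (hlim 0 le_rfl f) ?_
    simp only [(hR _).apply_zero, ContinuousLinearMap.id_apply, tendsto_const_nhds]
  · intro s t hs ht
    ext f
    obtain ⟨M, hM⟩ := exists_norm_le_of_forall_tendsto (hlim s hs)
    refine tendsto_nhds_unique (hlim (s + t) (add_nonneg hs ht) f) ?_
    simp only [(hR _).apply_add hs ht]
    exact tendsto_clm_apply_of_norm_le (.of_forall hM) (hlim s hs _) (hlim t ht f)

namespace IsC0Semigroup

variable {T : ℝ → E →L[ℝ] E}

lemma tendsto_zero (hT : IsC0Semigroup T) (f : E) : Tendsto (fun t => T t f) (𝓝[>] 0) (𝓝 f) := by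
  simpa only [hT.1.apply_zero] using
    (hT.2 f 0 Set.self_mem_Ici).mono_left (nhdsWithin_mono _ Set.Ioi_subset_Ici_self)

lemma continuousOn_sub (hT : IsC0Semigroup T) (t : ℝ) (f : E) :
    ContinuousOn (fun s => T (t - s) f) (Set.Icc 0 t) :=
  (hT.2 f).comp (by fun_prop) fun _ hs => sub_nonneg.2 hs.2

lemma inGenerator_apply (hT : IsC0Semigroup T) {f g : E} {s : ℝ} (hs : 0 ≤ s)
    (h : InGenerator T f g) : InGenerator T (T s f) (T s g) := by
  refine (((T s).continuous.tendsto g).comp h).congr' ?_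
  filter_upwards [self_mem_nhdsWithin] with t ht
  have ht : 0 ≤ t := le_of_lt ht
  rw [Function.comp_apply, map_smul, map_sub, ← hT.1.apply_add hs ht, ← hT.1.apply_add ht hs,
    add_comm]

lemma inGenerator_iff_hasDerivWithinAt (hT : IsC0Semigroup T) {f g : E} :
    InGenerator T f g ↔ HasDerivWithinAt (fun t => T t f) g (Set.Ioi 0) 0 := by
  simp only [hasDerivWithinAt_Ioi_iff_tendsto_slope_zero, zero_add, hT.1.apply_zero, InGenerator]

variable [CompleteSpace E]

lemma exists_norm_le (hT : IsC0Semigroup T) (a : ℝ) : ∃ M, ∀ t ∈ Set.Icc 0 a, ‖T t‖ ≤ M :=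
  exists_norm_le_of_forall_continuousOn isCompact_Icc fun f =>
    (hT.2 f).mono Set.Icc_subset_Ici_self

lemma inGenerator_integral (hT : IsC0Semigroup T) (f : E) {a : ℝ} (ha : 0 ≤ a) :
    InGenerator T (∫ s in 0..a, T s f) (T a f - f) := by
  have hint {b c : ℝ} (hb : 0 ≤ b) (hc : 0 ≤ c) :
      IntervalIntegrable (fun s => T s f) volume b c :=
    ((hT.2 f).mono fun s hs => (le_min hb hc).trans hs.1).intervalIntegrable
  have hlim := (tendsto_inv_smul_integral_nhdsGT ((hT.2 f).mono (Set.Ici_subset_Ici.2 ha))).sub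
    (tendsto_inv_smul_integral_nhdsGT (hT.2 f))
  rw [hT.1.apply_zero] at hlim
  refine hlim.congr' ?_
  filter_upwards [self_mem_nhdsWithin] with t ht
  have ht : 0 ≤ t := le_of_lt ht
  have hshift : T t (∫ s in 0..a, T s f) = ∫ s in t..a + t, T s f := calc
    _ = ∫ s in 0..a, T t (T s f) :=
      (ContinuousLinearMap.intervalIntegral_comp_comm _ (hint le_rfl ha)).symm
    _ = ∫ s in 0..a, T (s + t) f := intervalIntegral.integral_congr fun s hs => by
      rw [Set.uIcc_of_le ha] at hs
      rw [add_comm, hT.1.apply_add ht hs.1]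
    _ = ∫ s in t..a + t, T s f := by
      rw [intervalIntegral.integral_comp_add_right (fun s => T s f), zero_add]
  have hsplit : (∫ s in 0..a, T s f) + ∫ s in a..a + t, T s f =
      (∫ s in 0..t, T s f) + ∫ s in t..a + t, T s f := by
    rw [intervalIntegral.integral_add_adjacent_intervals (hint le_rfl ha)
      (hint ha (add_nonneg ha ht)), intervalIntegral.integral_add_adjacent_intervals
      (hint le_rfl ht) (hint ht (add_nonneg ha ht))]
  rw [hshift, ← smul_sub, zero_add, eq_sub_of_add_eq' hsplit]
  congr 1
  abel

lemma dense_domain (hT : IsC0Semigroup T) : Dense {f | ∃ g, InGenerator T f g} := by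
  intro f
  have hlim := tendsto_inv_smul_integral_nhdsGT (hT.2 f)
  rw [hT.1.apply_zero] at hlim
  refine mem_closure_of_tendsto hlim ?_
  filter_upwards [self_mem_nhdsWithin] with a ha
  have hmem := (hT.inGenerator_integral f (le_of_lt ha)).const_smul a⁻¹
  exact ⟨a⁻¹ • (T a f - f), hmem.congr fun t => by
    rw [zero_add, map_smul, ← smul_sub, smul_comm]⟩

end IsC0Semigroup

/-- The rescaled semigroup `t ↦ e^{ct} T(t)`, whose generator is that of `T` shifted by `c`. -/
def expScale (c : ℝ) (T : ℝ → E →L[ℝ] E) : ℝ → E →L[ℝ] E := fun t => Real.exp (c * t) • T t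

lemma expScale_apply (c : ℝ) (T : ℝ → E →L[ℝ] E) (t : ℝ) (f : E) :
    expScale c T t f = Real.exp (c * t) • T t f := rfl

lemma expScale_neg_expScale (c : ℝ) (T : ℝ → E →L[ℝ] E) : expScale (-c) (expScale c T) = T := by
  ext t f
  simp only [expScale_apply, smul_smul, ← Real.exp_add]
  simp

lemma isC0Semigroup_expScale {T : ℝ → E →L[ℝ] E} (hT : IsC0Semigroup T) (c : ℝ) :
    IsC0Semigroup (expScale c T) := by
  refine ⟨⟨?_, fun s t hs ht => ?_⟩, fun f => ?_⟩
  · ext f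
    simp [expScale_apply, hT.1.apply_zero]
  · ext f
    simp only [expScale_apply, ContinuousLinearMap.comp_apply, map_smul, hT.1.apply_add hs ht,
      smul_smul, mul_add, Real.exp_add, mul_comm]
  · exact ContinuousOn.smul (by fun_prop) (hT.2 f)

lemma inGenerator_expScale {T : ℝ → E →L[ℝ] E} (hT : IsC0Semigroup T) (c : ℝ)
    {f g : E} (h : InGenerator T f g) : InGenerator (expScale c T) f (g + c • f) := by
  rw [hT.inGenerator_iff_hasDerivWithinAt] at h
  have hexp : HasDerivWithinAt (fun t => Real.exp (c * t)) c (Set.Ioi 0) 0 := by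
    simpa using ((hasDerivAt_id (0 : ℝ)).const_mul c).exp.hasDerivWithinAt
  rw [(isC0Semigroup_expScale hT c).inGenerator_iff_hasDerivWithinAt]
  simpa [expScale_apply, hT.1.apply_zero] using hexp.fun_smul h

end Semigroup

section Perturbation

variable {E : Type*} [NormedAddCommGroup E] [NormedSpace ℝ E] {T S R : ℝ → E →L[ℝ] E}
  {B C : E →L[ℝ] E}

/-- `S` is the `C₀`-semigroup generated by `A + B`, where `A` is the generator of the
`C₀`-semigroup `T` and `B` is a bounded operator. -/
structure IsBoundedPerturbation (T : ℝ → E →L[ℝ] E) (B : E →L[ℝ] E) (S : ℝ → E →L[ℝ] E) :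
    Prop where
  left : IsC0Semigroup T
  right : IsC0Semigroup S
  inGenerator_iff (f g : E) : InGenerator S f g ↔ InGenerator T f (g - B f)

lemma isBoundedPerturbation_expScale (hT : IsC0Semigroup T) (c : ℝ) :
    IsBoundedPerturbation T (c • ContinuousLinearMap.id ℝ E) (expScale c T) := by
  have hexp := isC0Semigroup_expScale hT c
  refine ⟨hT, hexp, fun f g => ⟨fun h => ?_, fun h => ?_⟩⟩
  · simpa [expScale_neg_expScale, ← sub_eq_add_neg] using inGenerator_expScale hexp (-c) h
  · simpa using inGenerator_expScale hT c h

namespace IsBoundedPerturbation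

lemma symm (h : IsBoundedPerturbation T B S) : IsBoundedPerturbation S (-B) T where
  left := h.right
  right := h.left
  inGenerator_iff f g := by simp [h.inGenerator_iff]

lemma trans (hTS : IsBoundedPerturbation T B S) (hSR : IsBoundedPerturbation S C R) :
    IsBoundedPerturbation T (B + C) R where
  left := hTS.left
  right := hSR.right
  inGenerator_iff f g := by
    rw [hSR.inGenerator_iff, hTS.inGenerator_iff, add_apply, sub_sub, add_comm]

variable [CompleteSpace E]

lemma continuousOn_comp (h : IsBoundedPerturbation T B S) (t : ℝ) (f : E) :
    ContinuousOn (fun s => T (t - s) (S s f)) (Set.Icc 0 t) :=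
  continuousOn_clm_apply_of_isCompact isCompact_Icc (h.left.continuousOn_sub t)
    ((h.right.2 f).mono Set.Icc_subset_Ici_self)

lemma continuousOn_duhamel (h : IsBoundedPerturbation T B S) (t : ℝ) (f : E) :
    ContinuousOn (fun s => T (t - s) (B (S s f))) (Set.Icc 0 t) :=
  continuousOn_clm_apply_of_isCompact isCompact_Icc (h.left.continuousOn_sub t)
    (B.continuous.comp_continuousOn ((h.right.2 f).mono Set.Icc_subset_Ici_self))

lemma hasDerivWithinAt_comp (h : IsBoundedPerturbation T B S) {f g : E} (hf : InGenerator S f g)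
    {s t : ℝ} (hs : 0 ≤ s) (hst : s < t) :
    HasDerivWithinAt (fun s => T (t - s) (S s f)) (T (t - s) (B (S s f))) (Set.Ioi s) s := by
  have hmem : ∀ᶠ r in 𝓝[>] (0 : ℝ), r ∈ Set.Ioo 0 (t - s) := Ioo_mem_nhdsGT (sub_pos.2 hst)
  have hSx : InGenerator S (S s f) (S s g) := h.right.inGenerator_apply hs hf
  have hquot := hSx.sub ((h.inGenerator_iff _ _).1 hSx)
  rw [sub_sub_self] at hquot
  obtain ⟨M, hM⟩ := h.left.exists_norm_le (t - s)
  have hbound : ∀ᶠ r in 𝓝[>] (0 : ℝ), ‖T (t - s - r)‖ ≤ M := hmem.mono fun r hr =>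
    hM _ ⟨sub_nonneg.2 hr.2.le, sub_le_self _ hr.1.le⟩
  have hcont : Tendsto (fun r => T (t - s - r) (B (S s f))) (𝓝[>] 0)
      (𝓝 (T (t - s) (B (S s f)))) := by
    have := h.left.continuousOn_sub (t - s) (B (S s f)) 0 ⟨le_rfl, (sub_pos.2 hst).le⟩
    rw [ContinuousWithinAt, sub_zero] at this
    exact this.mono_left (nhdsWithin_le_of_mem (hmem.mono fun _ hr => Set.Ioo_subset_Icc_self hr))
  rw [hasDerivWithinAt_Ioi_iff_tendsto_slope_zero]
  refine (tendsto_clm_apply_of_norm_le hbound hcont hquot).congr' ?_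
  filter_upwards [hmem] with r hr
  have hT : T (t - s - r) (T r (S s f)) = T (t - s) (S s f) := by
    rw [← h.left.1.apply_add (sub_nonneg.2 hr.2.le) hr.1.le, sub_add_cancel]
  rw [← smul_sub, sub_sub_sub_cancel_right, map_smul, map_sub, hT,
    ← h.right.1.apply_add hr.1.le hs, add_comm r s, sub_sub]

theorem duhamel (h : IsBoundedPerturbation T B S) {t : ℝ} (ht : 0 ≤ t) (f : E) :
    S t f = T t f + ∫ s in 0..t, T (t - s) (B (S s f)) := by
  have hdomain : ∀ f ∈ {f | ∃ g, InGenerator S f g},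
      S t f = T t f + ∫ s in 0..t, T (t - s) (B (S s f)) := by
    rintro f ⟨g, hf⟩
    have hint : IntervalIntegrable (fun s => T (t - s) (B (S s f))) volume 0 t :=
      (h.continuousOn_duhamel t f).intervalIntegrable_of_Icc ht
    rw [intervalIntegral.integral_eq_sub_of_hasDeriv_right_of_le ht (h.continuousOn_comp t f)
      (fun s hs => h.hasDerivWithinAt_comp hf hs.1.le hs.2) hint, sub_self, sub_zero,
      h.left.1.apply_zero, h.right.1.apply_zero, add_sub_cancel]
  have hcont : Continuous fun f => ∫ s in 0..t, T (t - s) (B (S s f)) :=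
    continuous_intervalIntegral_clm_apply (K := fun s => T (t - s) ∘L B ∘L S s) ht
      (h.continuousOn_duhamel t)
  exact congrFun (Continuous.ext_on h.right.dense_domain (S t).continuous
    ((T t).continuous.add hcont) hdomain) f

end IsBoundedPerturbation

end Perturbation

section Positivity

variable {E : Type*} [NormedAddCommGroup E] [Lattice E] [HasSolidNorm E] [IsOrderedAddMonoid E]

lemma norm_le_norm_of_nonneg_of_le {x y : E} (hx : 0 ≤ x) (hxy : x ≤ y) : ‖x‖ ≤ ‖y‖ :=
  norm_le_norm_of_abs_le_abs (by rwa [abs_of_nonneg hx, abs_of_nonneg (hx.trans hxy)])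

lemma tendsto_of_eventually_le_of_le {X : Type*} {l : Filter X} {u v w : X → E} {a : E}
    (hu : Tendsto u l (𝓝 a)) (hw : Tendsto w l (𝓝 a)) (huv : ∀ᶠ x in l, u x ≤ v x)
    (hvw : ∀ᶠ x in l, v x ≤ w x) : Tendsto v l (𝓝 a) := by
  have hwu : Tendsto (fun x => ‖w x - u x‖) l (𝓝 0) := by simpa using (hw.sub hu).norm
  have hvu : Tendsto (fun x => v x - u x) l (𝓝 0) := by
    refine squeeze_zero_norm' ?_ hwu
    filter_upwards [huv, hvw] with x hx hx'
    exact norm_le_norm_of_nonneg_of_le (sub_nonneg.2 hx) (sub_le_sub_right hx' _)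
  simpa using hvu.add hu

variable [NormedSpace ℝ E]

lemma norm_le_norm_of_monotone_of_le {K L : E →L[ℝ] E} (hK : Monotone K)
    (hKL : ∀ f, 0 ≤ f → K f ≤ L f) : ‖K‖ ≤ ‖L‖ := by
  refine K.opNorm_le_bound (norm_nonneg L) fun f => ?_
  have habs : |K f| ≤ K |f| := abs_le'.2
    ⟨hK (le_abs_self f), by rw [← map_neg]; exact hK (neg_le_abs f)⟩
  calc
    ‖K f‖ ≤ ‖K |f|‖ := norm_le_norm_of_abs_le_abs (habs.trans (le_abs_self _))
    _ ≤ ‖L |f|‖ := norm_le_norm_of_nonneg_of_le ((abs_nonneg _).trans habs) (hKL _ (abs_nonneg f))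
    _ ≤ ‖L‖ * ‖f‖ := by simpa only [norm_abs_eq_norm] using L.le_opNorm |f|

lemma IsC0Semigroup.continuousOn_negPart {T : ℝ → E →L[ℝ] E} (hT : IsC0Semigroup T) (f : E)
    (t : ℝ) : ContinuousOn (fun s => (T s f)⁻) (Set.Icc 0 t) :=
  continuous_negPart.comp_continuousOn ((hT.2 f).mono Set.Icc_subset_Ici_self)

variable [IsOrderedModule ℝ E]

lemma intervalIntegral_nonneg_of_forall_mem {u : ℝ → E} {a b : ℝ} (hab : a ≤ b)
    (hu : ∀ s ∈ Set.Icc a b, 0 ≤ u s) : 0 ≤ ∫ s in a..b, u s := by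
  rw [intervalIntegral.integral_of_le hab]
  exact integral_nonneg_of_ae <| ae_restrict_of_forall_mem measurableSet_Ioc fun s hs =>
    hu s (Set.Ioc_subset_Icc_self hs)

namespace IsBoundedPerturbation

variable [CompleteSpace E] {T S R : ℝ → E →L[ℝ] E} {B C : E →L[ℝ] E} {f : E} {t : ℝ}

lemma negPart_le_integral (h : IsBoundedPerturbation T B S)
    (hT : ∀ t, 0 ≤ t → Monotone (T t)) (hB : Monotone B) (ht : 0 ≤ t) (hf : 0 ≤ f) :
    (S t f)⁻ ≤ ∫ s in 0..t, T (t - s) (B (S s f)⁻) := by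
  have hTB : ∀ s ∈ Set.Icc 0 t, ∀ x, 0 ≤ x → 0 ≤ T (t - s) (B x) := fun s hs x hx =>
    (monotone_iff_map_nonneg _).1 (hT _ (sub_nonneg.2 hs.2)) _
      ((monotone_iff_map_nonneg B).1 hB x hx)
  have hint : IntervalIntegrable (fun s => T (t - s) (B (S s f)⁻)) volume 0 t :=
    (continuousOn_clm_apply_of_isCompact isCompact_Icc (h.left.continuousOn_sub t)
      (B.continuous.comp_continuousOn
        (h.right.continuousOn_negPart f t))).intervalIntegrable_of_Icc ht
  have hdecomp : S t f + ∫ s in 0..t, T (t - s) (B (S s f)⁻) =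
      T t f + ∫ s in 0..t, T (t - s) (B (S s f)⁺) := by
    rw [h.duhamel ht f, add_assoc, ← intervalIntegral.integral_add
      ((h.continuousOn_duhamel t f).intervalIntegrable_of_Icc ht) hint]
    simp only [← map_add, ← sub_eq_iff_eq_add.1 (posPart_sub_negPart _)]
  have hnonneg : 0 ≤ S t f + ∫ s in 0..t, T (t - s) (B (S s f)⁻) := by
    rw [hdecomp]
    exact add_nonneg ((monotone_iff_map_nonneg _).1 (hT t ht) f hf)
      (intervalIntegral_nonneg_of_forall_mem ht fun s hs => hTB s hs _ (posPart_nonneg _))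
  rw [negPart_def]
  exact sup_le (neg_le_iff_add_nonneg'.2 hnonneg)
    (intervalIntegral_nonneg_of_forall_mem ht fun s hs => hTB s hs _ (negPart_nonneg _))

/-- The norm of the negative part of an orbit satisfies a homogeneous Grönwall inequality. -/
lemma monotone (h : IsBoundedPerturbation T B S) (hT : ∀ t, 0 ≤ t → Monotone (T t))
    (hB : Monotone B) (ht : 0 ≤ t) : Monotone (S t) := by
  rw [monotone_iff_map_nonneg]
  intro f hf
  obtain ⟨M, hM⟩ := h.left.exists_norm_le t
  have hcont : ContinuousOn (fun s => ‖(S s f)⁻‖) (Set.Icc 0 t) :=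
    (h.right.continuousOn_negPart f t).norm
  have hgronwall : ∀ r ∈ Set.Icc 0 t, ‖(S r f)⁻‖ ≤ (M * ‖B‖) * ∫ s in 0..r, ‖(S s f)⁻‖ := by
    intro r hr
    have hle := h.negPart_le_integral hT hB hr.1 hf
    rw [← intervalIntegral.integral_const_mul]
    refine (norm_le_norm_of_nonneg_of_le (negPart_nonneg _) hle).trans ?_
    refine intervalIntegral.norm_integral_le_of_norm_le hr.1 (.of_forall fun s hs => ?_)
      ((hcont.mono (Set.Icc_subset_Icc_right hr.2)).intervalIntegrable_of_Icc hr.1 |>.const_mul _)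
    have hrs : r - s ∈ Set.Icc 0 t := ⟨sub_nonneg.2 hs.2, (sub_le_self r hs.1.le).trans hr.2⟩
    exact (T (r - s) ∘L B).le_of_opNorm_le ((T (r - s)).opNorm_comp_le B |>.trans
      (mul_le_mul_of_nonneg_right (hM _ hrs) (norm_nonneg B))) _
  rw [← negPart_eq_zero, ← norm_eq_zero]
  exact eq_zero_of_le_mul_integral hcont (fun _ _ => norm_nonneg _) hgronwall t ⟨ht, le_rfl⟩

lemma monotone_of_add_smul_id (h : IsBoundedPerturbation T B S)
    (hT : ∀ t, 0 ≤ t → Monotone (T t)) {c : ℝ}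
    (hB : Monotone (B + c • ContinuousLinearMap.id ℝ E)) (ht : 0 ≤ t) : Monotone (S t) := by
  have hscaled : Monotone (expScale c S t) :=
    (h.trans (isBoundedPerturbation_expScale h.right c)).monotone hT hB ht
  rw [← expScale_neg_expScale c S]
  exact fun x y hxy => smul_le_smul_of_nonneg_left (hscaled hxy) (Real.exp_pos _).le

lemma le_apply (h : IsBoundedPerturbation T B S) (hT : ∀ t, 0 ≤ t → Monotone (T t))
    (hS : ∀ t, 0 ≤ t → Monotone (S t)) (hB : Monotone B) (ht : 0 ≤ t) (hf : 0 ≤ f) :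
    T t f ≤ S t f := by
  rw [h.duhamel ht f]
  exact le_add_of_nonneg_right <| intervalIntegral_nonneg_of_forall_mem ht fun s hs =>
    (monotone_iff_map_nonneg _).1 (hT _ (sub_nonneg.2 hs.2)) _ <|
      (monotone_iff_map_nonneg B).1 hB _ ((monotone_iff_map_nonneg _).1 (hS s hs.1) f hf)

/-- By Duhamel's formula the difference of both sides is
`∫₀ᵗ R(t - s) ((1 - ε) B T(s) + ε C S(s)) f ds`. -/
lemma le_convexCombination (hRT : IsBoundedPerturbation R B T)
    (hRS : IsBoundedPerturbation R C S) (hR : ∀ t, 0 ≤ t → Monotone (R t))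
    (hS : ∀ t, 0 ≤ t → Monotone (S t)) (hB : Monotone B) {ε : ℝ} (hε : ε ≤ 1)
    (hBC : Monotone ((1 - ε) • B + ε • C)) (hST : ∀ t, 0 ≤ t → S t f ≤ T t f)
    (ht : 0 ≤ t) (hf : 0 ≤ f) :
    R t f ≤ (1 - ε) • T t f + ε • S t f := by
  have hintT : IntervalIntegrable (fun s => (1 - ε) • R (t - s) (B (T s f))) volume 0 t :=
    ((hRT.continuousOn_duhamel t f).const_smul _).intervalIntegrable_of_Icc ht
  have hintS : IntervalIntegrable (fun s => ε • R (t - s) (C (S s f))) volume 0 t :=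
    ((hRS.continuousOn_duhamel t f).const_smul _).intervalIntegrable_of_Icc ht
  have hdiff : (1 - ε) • T t f + ε • S t f = R t f +
      ∫ s in 0..t, R (t - s) ((1 - ε) • B (T s f) + ε • C (S s f)) := by
    simp only [map_add, map_smul]
    rw [intervalIntegral.integral_add hintT hintS, intervalIntegral.integral_smul,
      intervalIntegral.integral_smul, hRT.duhamel ht f, hRS.duhamel ht f]
    module
  rw [hdiff]
  refine le_add_of_nonneg_right (intervalIntegral_nonneg_of_forall_mem ht fun s hs => ?_)
  refine (monotone_iff_map_nonneg _).1 (hR _ (sub_nonneg.2 hs.2)) _ ?_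
  calc
    0 ≤ (1 - ε) • B (S s f) + ε • C (S s f) := (monotone_iff_map_nonneg _).1 hBC _
      ((monotone_iff_map_nonneg _).1 (hS s hs.1) f hf)
    _ ≤ (1 - ε) • B (T s f) + ε • C (S s f) := add_le_add_left
      (smul_le_smul_of_nonneg_left (hB (hST s hs.1)) (sub_nonneg.2 hε)) _

end IsBoundedPerturbation

end Positivity

section SmallTime

lemma tendsto_zero_of_le_mul_comp_add {X : Type*} {l : Filter X} {φ ρ : X → ℝ} {h : X → X}
    {c C : ℝ} (hc0 : 0 ≤ c) (hc1 : c < 1) (hh : Tendsto h l l) (hφ0 : ∀ᶠ x in l, 0 ≤ φ x)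
    (hφC : ∀ᶠ x in l, φ x ≤ C) (hρ : Tendsto ρ l (𝓝 0))
    (hle : ∀ᶠ x in l, φ x ≤ c * φ (h x) + ρ x) : Tendsto φ l (𝓝 0) := by
  have hiter {η : ℝ} (hη : 0 < η) (k : ℕ) : ∀ᶠ x in l, φ x ≤ c ^ k * C + η := by
    induction k with
    | zero => filter_upwards [hφC] with x hx; linarith
    | succ k ih =>
      have hρη := hρ.eventually_le_const (mul_pos (sub_pos.2 hc1) hη)
      filter_upwards [hle, hh.eventually ih, hρη] with x hx hhx hρx
      calc
        φ x ≤ c * φ (h x) + ρ x := hx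
        _ ≤ c * (c ^ k * C + η) + (1 - c) * η := by gcongr
        _ = c ^ (k + 1) * C + η := by ring
  rw [Metric.tendsto_nhds]
  intro δ hδ
  have hpow : Tendsto (fun k : ℕ => c ^ k * C) atTop (𝓝 0) := by
    simpa using (tendsto_pow_atTop_nhds_zero_of_lt_one hc0 hc1).mul_const C
  obtain ⟨k, hk⟩ := (hpow.eventually_lt_const (half_pos hδ)).exists
  filter_upwards [hφ0, hiter (half_pos hδ) k] with x hx0 hx
  rw [Real.dist_eq, sub_zero, abs_of_nonneg hx0]
  linarith

variable {E : Type*} [NormedAddCommGroup E] [NormedSpace ℝ E] {T S R : ℝ → E →L[ℝ] E}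
  {P : E →L[ℝ] E} {M ε : ℝ}

/-- `P = s-lim_{t→0+} F(t)`. -/
def HasStrongLimitAtZero (F : ℝ → E →L[ℝ] E) (P : E →L[ℝ] E) : Prop :=
  ∀ f, Tendsto (fun t => F t f) (𝓝[>] 0) (𝓝 (P f))

lemma tendsto_half_nhdsGT_zero : Tendsto (fun t : ℝ => t / 2) (𝓝[>] 0) (𝓝[>] 0) := by
  refine tendsto_nhdsWithin_iff.2 ⟨?_, ?_⟩
  · have hlim : Tendsto (fun t : ℝ => t) (𝓝[>] 0) (𝓝 0) := nhdsWithin_le_nhds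
    simpa using hlim.div_const 2
  · filter_upwards [self_mem_nhdsWithin] with t ht
    exact half_pos (Set.mem_Ioi.1 ht)

lemma HasStrongLimitAtZero.apply_apply (hP : HasStrongLimitAtZero S P) (hS : IsSemigroup S)
    (hM : ∀ᶠ t in 𝓝[>] 0, ‖S t‖ ≤ M) (f : E) : P (P f) = P f := by
  have hcomp := (tendsto_clm_apply_of_norm_le hM (hP (P f)) (hP f)).comp tendsto_half_nhdsGT_zero
  refine tendsto_nhds_unique (hcomp.congr' ?_) (hP f)
  filter_upwards [self_mem_nhdsWithin] with t ht
  have ht2 : 0 ≤ t / 2 := (half_pos ht).le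
  rw [Function.comp_apply, ← hS.apply_add ht2 ht2, add_halves]

variable [Lattice E] [IsOrderedAddMonoid E]

/-- Split `f = P f + (f - P f)` into its components in the range and in the kernel of `P`. -/
lemma HasStrongLimitAtZero.of_fixed_of_null (hP : HasStrongLimitAtZero S P)
    (hidem : ∀ f, P (P f) = P f) (hP0 : ∀ f, 0 ≤ f → 0 ≤ P f) (hP1 : ∀ f, 0 ≤ f → P f ≤ f)
    (hfixed : ∀ g, 0 ≤ g → Tendsto (fun t => S t g) (𝓝[>] 0) (𝓝 g) →
      Tendsto (fun t => R t g) (𝓝[>] 0) (𝓝 g))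
    (hnull : ∀ g, 0 ≤ g → Tendsto (fun t => S t g) (𝓝[>] 0) (𝓝 0) →
      Tendsto (fun t => R t g) (𝓝[>] 0) (𝓝 0)) :
    HasStrongLimitAtZero R P := by
  have hpos (f : E) (hf : 0 ≤ f) : Tendsto (fun t => R t f) (𝓝[>] 0) (𝓝 (P f)) := by
    have hrange : Tendsto (fun t => S t (P f)) (𝓝[>] 0) (𝓝 (P f)) := by
      simpa only [hidem] using hP (P f)
    have hker : Tendsto (fun t => S t (f - P f)) (𝓝[>] 0) (𝓝 0) := by
      simpa only [map_sub, hidem, sub_self] using hP (f - P f)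
    simpa using (hfixed _ (hP0 f hf) hrange).add (hnull _ (sub_nonneg.2 (hP1 f hf)) hker)
  intro f
  rw [← posPart_sub_negPart f]
  simpa only [map_sub] using (hpos _ (posPart_nonneg f)).sub (hpos _ (negPart_nonneg f))

/-- The order relations, on the positive cone, between absorption semigroups `S = T_V` and
`R = T_U` with rates satisfying `ε V ≤ U ≤ V`. -/
structure IsSandwiched (ε : ℝ) (T S R : ℝ → E →L[ℝ] E) : Prop where
  nonneg : ∀ t, 0 ≤ t → ∀ f, 0 ≤ f → 0 ≤ S t f
  left_le : ∀ t, 0 ≤ t → ∀ f, 0 ≤ f → S t f ≤ R t f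
  le_right : ∀ t, 0 ≤ t → ∀ f, 0 ≤ f → R t f ≤ T t f
  le_convexCombination : ∀ t, 0 ≤ t → ∀ f, 0 ≤ f → R t f ≤ (1 - ε) • T t f + ε • S t f

namespace IsSandwiched

lemma monotone_left (h : IsSandwiched ε T S R) {t : ℝ} (ht : 0 ≤ t) : Monotone (S t) :=
  (monotone_iff_map_nonneg _).2 (h.nonneg t ht)

lemma monotone_right (h : IsSandwiched ε T S R) {t : ℝ} (ht : 0 ≤ t) : Monotone (R t) :=
  (monotone_iff_map_nonneg _).2 fun f hf => (h.nonneg t ht f hf).trans (h.left_le t ht f hf)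

variable [HasSolidNorm E]

lemma of_tendsto {Sn Rn : ℕ → ℝ → E →L[ℝ] E} (h : ∀ n, IsSandwiched ε T (Sn n) (Rn n))
    (hS : ∀ t, 0 ≤ t → ∀ f, Tendsto (fun n => Sn n t f) atTop (𝓝 (S t f)))
    (hR : ∀ t, 0 ≤ t → ∀ f, Tendsto (fun n => Rn n t f) atTop (𝓝 (R t f))) :
    IsSandwiched ε T S R where
  nonneg t ht f hf := ge_of_tendsto' (hS t ht f) fun n => (h n).nonneg t ht f hf
  left_le t ht f hf :=
    le_of_tendsto_of_tendsto' (hS t ht f) (hR t ht f) fun n => (h n).left_le t ht f hf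
  le_right t ht f hf := le_of_tendsto' (hR t ht f) fun n => (h n).le_right t ht f hf
  le_convexCombination t ht f hf :=
    le_of_tendsto_of_tendsto' (hR t ht f) (((hS t ht f).const_smul ε).const_add _)
      fun n => (h n).le_convexCombination t ht f hf

lemma tendsto_right_of_fixed (h : IsSandwiched ε T S R) (hT : IsC0Semigroup T) {f : E}
    (hf : 0 ≤ f) (hS : Tendsto (fun t => S t f) (𝓝[>] 0) (𝓝 f)) :
    Tendsto (fun t => R t f) (𝓝[>] 0) (𝓝 f) :=
  tendsto_of_eventually_le_of_le hS (hT.tendsto_zero f)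
    (eventually_mem_nhdsWithin.mono fun t ht => h.left_le t (le_of_lt ht) f hf)
    (eventually_mem_nhdsWithin.mono fun t ht => h.le_right t (le_of_lt ht) f hf)

lemma tendsto_left_of_null (h : IsSandwiched ε T S R) {f : E} (hf : 0 ≤ f)
    (hR : Tendsto (fun t => R t f) (𝓝[>] 0) (𝓝 0)) :
    Tendsto (fun t => S t f) (𝓝[>] 0) (𝓝 0) :=
  tendsto_of_eventually_le_of_le tendsto_const_nhds hR
    (eventually_mem_nhdsWithin.mono fun t ht => h.nonneg t (le_of_lt ht) f hf)
    (eventually_mem_nhdsWithin.mono fun t ht => h.left_le t (le_of_lt ht) f hf)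

lemma tendsto_left_of_fixed [IsOrderedModule ℝ E] (h : IsSandwiched ε T S R) (hε : 0 < ε)
    (hT : IsC0Semigroup T) {f : E} (hf : 0 ≤ f) (hR : Tendsto (fun t => R t f) (𝓝[>] 0) (𝓝 f)) :
    Tendsto (fun t => S t f) (𝓝[>] 0) (𝓝 f) := by
  have hlower : Tendsto (fun t => ε⁻¹ • (R t f - (1 - ε) • T t f)) (𝓝[>] 0) (𝓝 f) := by
    have hlim := (hR.sub ((hT.tendsto_zero f).const_smul (1 - ε))).const_smul ε⁻¹
    rwa [sub_smul, one_smul, sub_sub_self, inv_smul_smul₀ hε.ne'] at hlim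
  refine tendsto_of_eventually_le_of_le hlower hR ?_ ?_
  · filter_upwards [self_mem_nhdsWithin] with t ht
    rw [inv_smul_le_iff_of_pos hε, sub_le_iff_le_add']
    exact h.le_convexCombination t (le_of_lt ht) f hf
  · filter_upwards [self_mem_nhdsWithin] with t ht using h.left_le t (le_of_lt ht) f hf

variable [CompleteSpace E]

lemma exists_norm_le (h : IsSandwiched ε T S R) (hT : IsC0Semigroup T) :
    ∃ M, ∀ᶠ t in 𝓝[>] 0, ‖S t‖ ≤ M ∧ ‖R t‖ ≤ M := by
  obtain ⟨M, hM⟩ := hT.exists_norm_le 1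
  refine ⟨M, ?_⟩
  filter_upwards [Ioo_mem_nhdsGT one_pos] with t ht
  have hTM := hM t (Set.Ioo_subset_Icc_self ht)
  have hRT := h.le_right t ht.1.le
  exact ⟨(norm_le_norm_of_monotone_of_le (h.monotone_left ht.1.le) fun f hf =>
      (h.left_le t ht.1.le f hf).trans (hRT f hf)).trans hTM,
    (norm_le_norm_of_monotone_of_le (h.monotone_right ht.1.le) hRT).trans hTM⟩

/-- Since `R(2t) f ≤ (1 - ε) R(t) f + o(1)`, the orbit contracts to `0` as `t → 0+`. -/
lemma tendsto_right_of_null (h : IsSandwiched ε T S R) (hε : 0 < ε) (hε1 : ε ≤ 1)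
    (hT : IsC0Semigroup T) (hR : IsSemigroup R) {f : E} (hf : 0 ≤ f)
    (hS : Tendsto (fun t => S t f) (𝓝[>] 0) (𝓝 0)) :
    Tendsto (fun t => R t f) (𝓝[>] 0) (𝓝 0) := by
  obtain ⟨M, hM⟩ := h.exists_norm_le hT
  have hRM : ∀ᶠ t in 𝓝[>] 0, ‖R t‖ ≤ M := hM.mono fun _ => And.right
  set q : ℝ → E := fun t => (1 - ε) • (T t f - f) + ε • S t f with hq
  have hq0 : Tendsto q (𝓝[>] 0) (𝓝 0) := by
    simpa using (((hT.tendsto_zero f).sub_const f).const_smul (1 - ε)).add (hS.const_smul ε)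
  have hRq : Tendsto (fun t => ‖R t (q t)‖) (𝓝[>] 0) (𝓝 0) := by
    simpa using (tendsto_clm_apply_of_norm_le hRM (y := 0) (by simp) hq0).norm
  have hstep : ∀ᶠ t in 𝓝[>] 0, ‖R t f‖ ≤ (1 - ε) * ‖R (t / 2) f‖ + ‖R (t / 2) (q (t / 2))‖ := by
    filter_upwards [self_mem_nhdsWithin] with t ht
    have ht2 : 0 ≤ t / 2 := (half_pos ht).le
    have hle : R t f ≤ (1 - ε) • R (t / 2) f + R (t / 2) (q (t / 2)) := calc
      R t f = R (t / 2) (R (t / 2) f) := by rw [← hR.apply_add ht2 ht2, add_halves]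
      _ ≤ R (t / 2) ((1 - ε) • f + q (t / 2)) := h.monotone_right ht2 <| by
        refine (h.le_convexCombination _ ht2 f hf).trans_eq ?_
        rw [hq]
        module
      _ = (1 - ε) • R (t / 2) f + R (t / 2) (q (t / 2)) := by rw [map_add, map_smul]
    have hnonneg : 0 ≤ R t f :=
      (h.nonneg t (le_of_lt ht) f hf).trans (h.left_le t (le_of_lt ht) f hf)
    refine (norm_le_norm_of_nonneg_of_le hnonneg hle).trans ((norm_add_le _ _).trans_eq ?_)
    rw [norm_smul, Real.norm_of_nonneg (sub_nonneg.2 hε1)]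
  refine tendsto_zero_iff_norm_tendsto_zero.2 (tendsto_zero_of_le_mul_comp_add (sub_nonneg.2 hε1)
    (sub_lt_self 1 hε) tendsto_half_nhdsGT_zero (.of_forall fun _ => norm_nonneg _)
    (hRM.mono fun t ht => (R t).le_of_opNorm_le ht f) (hRq.comp tendsto_half_nhdsGT_zero) hstep)

theorem hasStrongLimitAtZero_iff [IsOrderedModule ℝ E] (h : IsSandwiched ε T S R) (hε : 0 < ε)
    (hε1 : ε ≤ 1) (hT : IsC0Semigroup T) (hS : IsSemigroup S) (hR : IsSemigroup R) :
    HasStrongLimitAtZero S P ↔ HasStrongLimitAtZero R P := by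
  obtain ⟨M, hM⟩ := h.exists_norm_le hT
  have hmem : ∀ᶠ t : ℝ in 𝓝[>] 0, 0 ≤ t :=
    eventually_mem_nhdsWithin.mono fun _ => Set.mem_Ici_of_Ioi
  constructor <;> intro hP
  · refine hP.of_fixed_of_null (hP.apply_apply hS (hM.mono fun _ => And.left))
      (fun f hf => ge_of_tendsto (hP f) (hmem.mono fun t ht => h.nonneg t ht f hf))
      (fun f hf => le_of_tendsto_of_tendsto (hP f) (hT.tendsto_zero f) (hmem.mono fun t ht =>
        (h.left_le t ht f hf).trans (h.le_right t ht f hf)))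
      (fun g hg => h.tendsto_right_of_fixed hT hg)
      (fun g hg => h.tendsto_right_of_null hε hε1 hT hR hg)
  · refine hP.of_fixed_of_null (hP.apply_apply hR (hM.mono fun _ => And.right))
      (fun f hf => ge_of_tendsto (hP f) (hmem.mono fun t ht =>
        (h.nonneg t ht f hf).trans (h.left_le t ht f hf)))
      (fun f hf => le_of_tendsto_of_tendsto (hP f) (hT.tendsto_zero f) (hmem.mono fun t ht =>
        h.le_right t ht f hf))
      (fun g hg => h.tendsto_left_of_fixed hε hT hg)
      (fun g hg => h.tendsto_left_of_null hg)

end IsSandwiched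

namespace IsBoundedPerturbation

variable [HasSolidNorm E] [IsOrderedModule ℝ E] [CompleteSpace E] {U V : E →L[ℝ] E} {c : ℝ}

theorem isSandwiched (hS : IsBoundedPerturbation T (-V) S) (hR : IsBoundedPerturbation T (-U) R)
    (hT : ∀ t, 0 ≤ t → Monotone (T t)) (hε1 : ε ≤ 1) (hU : Monotone U) (hUV : Monotone (V - U))
    (hεVU : Monotone (U - ε • V)) (hV : Monotone (c • ContinuousLinearMap.id ℝ E - V)) :
    IsSandwiched ε T S R := by
  have hSmono (t : ℝ) (ht : 0 ≤ t) : Monotone (S t) :=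
    hS.monotone_of_add_smul_id hT (c := c) (by rwa [neg_add_eq_sub]) ht
  have hRmono (t : ℝ) (ht : 0 ≤ t) : Monotone (R t) := by
    refine hR.monotone_of_add_smul_id hT (c := c) ?_ ht
    have hsum : -U + c • ContinuousLinearMap.id ℝ E =
        (c • ContinuousLinearMap.id ℝ E - V) + (V - U) := by abel
    rw [hsum]
    exact hV.add hUV
  have hRT : IsBoundedPerturbation R U T := by simpa using hR.symm
  have hRS : IsBoundedPerturbation R (U - V) S := by simpa [sub_eq_add_neg] using hRT.trans hS
  have hSR : IsBoundedPerturbation S (V - U) R := by simpa using hRS.symm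
  have hle {t : ℝ} {f : E} (ht : 0 ≤ t) (hf : 0 ≤ f) : S t f ≤ R t f :=
    hSR.le_apply hSmono hRmono hUV ht hf
  have hle' {t : ℝ} {f : E} (ht : 0 ≤ t) (hf : 0 ≤ f) : R t f ≤ T t f :=
    hRT.le_apply hRmono hT hU ht hf
  refine ⟨fun t ht => (monotone_iff_map_nonneg _).1 (hSmono t ht), fun t ht f => hle ht,
    fun t ht f => hle' ht, fun t ht f hf => ?_⟩
  have hcomb : (1 - ε) • U + ε • (U - V) = U - ε • V := by module
  exact hRT.le_convexCombination hRS hRmono hSmono hU hε1 (by rwa [hcomb])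
    (fun t ht => (hle ht hf).trans (hle' ht hf)) ht hf

end IsBoundedPerturbation

end SmallTime

section Rate

variable {Ω : Type*}

lemma trunc_nonneg (V : Ω → ℝ≥0∞) (n : ℕ) (ω : Ω) : 0 ≤ trunc V n ω := ENNReal.toReal_nonneg

lemma trunc_le (V : Ω → ℝ≥0∞) (n : ℕ) (ω : Ω) : trunc V n ω ≤ n := by
  simpa [trunc] using ENNReal.toReal_mono (ENNReal.natCast_ne_top n) (min_le_right (V ω) n)

lemma trunc_le_trunc {U V : Ω → ℝ≥0∞} {ω : Ω} (h : U ω ≤ V ω) (n : ℕ) :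
    trunc U n ω ≤ trunc V n ω :=
  ENNReal.toReal_mono (by simp) (min_le_min_right _ h)

lemma mul_trunc_le_trunc {U V : Ω → ℝ≥0∞} {ω : Ω} {ε : ℝ} (hε : 0 ≤ ε) (hε1 : ε ≤ 1)
    (h : smulRate ε V ω ≤ U ω) (n : ℕ) : ε * trunc V n ω ≤ trunc U n ω := by
  have hofReal : ENNReal.ofReal ε ≤ 1 := by simpa using ENNReal.ofReal_le_ofReal hε1
  have hmul : ENNReal.ofReal ε * min (V ω) n ≤ min (U ω) n :=
    le_min ((mul_le_mul_right (min_le_left _ _) _).trans h)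
      ((mul_le_of_le_one_left' hofReal).trans (min_le_right _ _))
  simpa [trunc, ENNReal.toReal_mul, ENNReal.toReal_ofReal hε] using
    ENNReal.toReal_mono (by simp) hmul

lemma smulRate_le_self {c : ℝ} (hc : c ≤ 1) (V : Ω → ℝ≥0∞) : smulRate c V ≤ V := fun _ =>
  mul_le_of_le_one_left' (by simpa using ENNReal.ofReal_le_ofReal hc)

lemma smulRate_inv_smulRate {c : ℝ} (hc : 0 < c) (V : Ω → ℝ≥0∞) :
    smulRate c⁻¹ (smulRate c V) = V := by
  funext ω
  rw [smulRate, smulRate, ← mul_assoc, ← ENNReal.ofReal_mul (inv_nonneg.2 hc.le),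
    inv_mul_cancel₀ hc.ne', ENNReal.ofReal_one, one_mul]

end Rate

section Lp

variable {Ω : Type*} [MeasurableSpace Ω] {μ : Measure Ω} {p : ℝ≥0∞} {W : Ω → ℝ} {c : ℝ}

lemma exists_seq_ae_tendsto_of_dense [Fact (1 ≤ p)] {D : Set (Lp ℝ p μ)} (hD : Dense D)
    (f : Lp ℝ p μ) : ∃ u : ℕ → Lp ℝ p μ, (∀ n, u n ∈ D) ∧
      ∀ᵐ ω ∂μ, Tendsto (fun n => u n ω) atTop (𝓝 (f ω)) := by
  obtain ⟨u, huD, hu⟩ := mem_closure_iff_seq_limit.1 (hD f)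
  obtain ⟨k, -, hk⟩ := (tendstoInMeasure_of_tendsto_Lp hu).exists_seq_tendsto_ae
  exact ⟨u ∘ k, fun n => huD (k n), hk⟩

lemma aestronglyMeasurable_mul_of_dense [Fact (1 ≤ p)] {D : Set (Lp ℝ p μ)} (hD : Dense D)
    (hW : ∀ f ∈ D, AEStronglyMeasurable (fun ω => W ω * f ω) μ) (f : Lp ℝ p μ) :
    AEStronglyMeasurable (fun ω => W ω * f ω) μ := by
  obtain ⟨u, huD, hu⟩ := exists_seq_ae_tendsto_of_dense hD f
  exact aestronglyMeasurable_of_tendsto_ae atTop (fun n => hW _ (huD n))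
    (hu.mono fun ω h => h.const_mul (W ω))

variable [Fact (1 ≤ p)]

instance : IsOrderedModule ℝ (Lp ℝ p μ) := by
  refine IsOrderedModule.of_smul_nonneg fun a ha f hf => ?_
  rw [← Lp.coeFn_nonneg] at hf ⊢
  filter_upwards [hf, Lp.coeFn_smul a f] with ω hfω hsmul
  rw [hsmul]
  exact mul_nonneg ha hfω

/-- `B` is the operator of multiplication by the (not necessarily measurable) function `W`. -/
def IsMulOp (W : Ω → ℝ) (B : Lp ℝ p μ →L[ℝ] Lp ℝ p μ) : Prop :=
  ∀ f : Lp ℝ p μ, ⇑(B f) =ᵐ[μ] fun ω => W ω * f ω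

lemma isMulOp_const (c : ℝ) :
    IsMulOp (fun _ => c) (c • ContinuousLinearMap.id ℝ (Lp ℝ p μ)) :=
  fun f => Lp.coeFn_smul c f

lemma exists_isMulOp (hW : ∀ f : Lp ℝ p μ, AEStronglyMeasurable (fun ω => W ω * f ω) μ)
    (hc : ∀ᵐ ω ∂μ, |W ω| ≤ c) : ∃ B : Lp ℝ p μ →L[ℝ] Lp ℝ p μ, IsMulOp W B := by
  have hle (f : Lp ℝ p μ) : ∀ᵐ ω ∂μ, ‖W ω * f ω‖ ≤ c * ‖f ω‖ := hc.mono fun ω h => by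
    rw [norm_mul]
    exact mul_le_mul_of_nonneg_right h (norm_nonneg _)
  have hmem (f : Lp ℝ p μ) : MemLp (fun ω => W ω * f ω) p μ :=
    (Lp.memLp f).of_le_mul (hW f) (hle f)
  let L : Lp ℝ p μ →ₗ[ℝ] Lp ℝ p μ :=
    { toFun := fun f => (hmem f).toLp
      map_add' := fun f g => by
        rw [← MemLp.toLp_add, MemLp.toLp_eq_toLp_iff]
        filter_upwards [Lp.coeFn_add f g] with ω h
        rw [h, Pi.add_apply, Pi.add_apply, mul_add]
      map_smul' := fun a f => by
        rw [RingHom.id_apply, ← MemLp.toLp_const_smul, MemLp.toLp_eq_toLp_iff]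
        filter_upwards [Lp.coeFn_smul a f] with ω h
        simp only [h, Pi.smul_apply, smul_eq_mul, mul_left_comm] }
  refine ⟨L.mkContinuous c fun f => Lp.norm_le_mul_norm_of_ae_le_mul ?_,
    fun f => (hmem f).coeFn_toLp⟩
  filter_upwards [(hmem f).coeFn_toLp, hle f] with ω h hω
  change ‖(hmem f).toLp _ ω‖ ≤ _
  rwa [h]

namespace IsMulOp

variable {W' : Ω → ℝ} {B B' : Lp ℝ p μ →L[ℝ] Lp ℝ p μ}

lemma sub (hB : IsMulOp W B) (hB' : IsMulOp W' B') :
    IsMulOp (fun ω => W ω - W' ω) (B - B') := by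
  intro f
  filter_upwards [hB f, hB' f, Lp.coeFn_sub (B f) (B' f)] with ω hBω hB'ω hsub
  rw [sub_apply, hsub, Pi.sub_apply, hBω, hB'ω, sub_mul]

lemma const_smul (hB : IsMulOp W B) (a : ℝ) : IsMulOp (fun ω => a * W ω) (a • B) := by
  intro f
  filter_upwards [hB f, Lp.coeFn_smul a (B f)] with ω hBω hsmul
  rw [smul_apply, hsmul, Pi.smul_apply, hBω, smul_eq_mul, mul_assoc]

lemma monotone (hB : IsMulOp W B) (hW : ∀ᵐ ω ∂μ, 0 ≤ W ω) : Monotone B := by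
  rw [monotone_iff_map_nonneg]
  intro f hf
  rw [← Lp.coeFn_nonneg] at hf ⊢
  filter_upwards [hf, hW, hB f] with ω hfω hWω hBω
  rw [hBω]
  exact mul_nonneg hWω hfω

end IsMulOp

namespace IsPerturbedSG

variable {T S : ℝ → Lp ℝ p μ →L[ℝ] Lp ℝ p μ}

/-- On the domain of the generator `W f` is a difference of elements of `L_p`, and the domain is
dense. -/
lemma aestronglyMeasurable_mul (hS : IsPerturbedSG μ p T S W) (f : Lp ℝ p μ) :
    AEStronglyMeasurable (fun ω => W ω * f ω) μ := by
  refine aestronglyMeasurable_mul_of_dense hS.1.dense_domain ?_ f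
  rintro f ⟨g, hg⟩
  obtain ⟨g₀, -, hg₀⟩ := (hS.2 f g).1 hg
  refine ((Lp.aestronglyMeasurable g₀).sub (Lp.aestronglyMeasurable g)).congr ?_
  filter_upwards [hg₀] with ω h
  rw [Pi.sub_apply, h, sub_sub_self]

lemma isBoundedPerturbation {B : Lp ℝ p μ →L[ℝ] Lp ℝ p μ} (hS : IsPerturbedSG μ p T S W)
    (hT : IsC0Semigroup T) (hB : IsMulOp W B) : IsBoundedPerturbation T (-B) S := by
  have hiff (f g g₀ : Lp ℝ p μ) :
      ⇑g =ᵐ[μ] (fun ω => g₀ ω - W ω * f ω) ↔ g₀ = g - (-B) f := by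
    rw [neg_apply, sub_neg_eq_add, ← sub_eq_iff_eq_add, eq_comm, Lp.ext_iff]
    refine ⟨fun h => ?_, fun h => ?_⟩ <;>
      filter_upwards [h, hB f, Lp.coeFn_sub g₀ (B f)] with ω hω hBω hsub
    · rw [hω, hsub, Pi.sub_apply, hBω]
    · rw [hω, hsub, Pi.sub_apply, hBω]
  exact ⟨hT, hS.1, fun f g => by simp only [hS.2, hiff, exists_eq_right]⟩

end IsPerturbedSG

section AbsorptionSemigroup

variable {T S R : ℝ → Lp ℝ p μ →L[ℝ] Lp ℝ p μ} {U V : Ω → ℝ≥0∞} {ε : ℝ}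

lemma IsAbsorptionSG.isSemigroup (hS : IsAbsorptionSG μ p T V S) : IsSemigroup S := by
  obtain ⟨Sn, hSn, hlim⟩ := hS
  exact IsSemigroup.of_tendsto (fun n => (hSn n).1.1) hlim

lemma IsPerturbedSG.exists_isMulOp_trunc {n : ℕ} (hS : IsPerturbedSG μ p T S (trunc V n)) :
    ∃ B : Lp ℝ p μ →L[ℝ] Lp ℝ p μ, IsMulOp (trunc V n) B :=
  exists_isMulOp (c := n) hS.aestronglyMeasurable_mul <| .of_forall fun ω => by
    rw [abs_of_nonneg (trunc_nonneg V n ω)]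
    exact trunc_le V n ω

theorem IsAbsorptionSG.isSandwiched (hS : IsAbsorptionSG μ p T V S)
    (hR : IsAbsorptionSG μ p T U R) (hT : IsC0Semigroup T) (hTpos : IsPositiveSG T)
    (hε : 0 ≤ ε) (hε1 : ε ≤ 1) (hUV : U ≤ᵐ[μ] V) (hVU : smulRate ε V ≤ᵐ[μ] U) :
    IsSandwiched ε T S R := by
  obtain ⟨Sn, hSn, hSlim⟩ := hS
  obtain ⟨Rn, hRn, hRlim⟩ := hR
  refine IsSandwiched.of_tendsto (fun n => ?_) hSlim hRlim
  obtain ⟨BV, hBV⟩ := (hSn n).exists_isMulOp_trunc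
  obtain ⟨BU, hBU⟩ := (hRn n).exists_isMulOp_trunc
  exact ((hSn n).isBoundedPerturbation hT hBV).isSandwiched
    ((hRn n).isBoundedPerturbation hT hBU)
    (fun t ht => (monotone_iff_map_nonneg _).2 (hTpos t ht)) hε1
    (hBU.monotone (.of_forall (trunc_nonneg U n)))
    ((hBV.sub hBU).monotone (hUV.mono fun _ h => sub_nonneg.2 (trunc_le_trunc h n)))
    ((hBU.sub (hBV.const_smul ε)).monotone
      (hVU.mono fun _ h => sub_nonneg.2 (mul_trunc_le_trunc hε hε1 h n)))
    (((isMulOp_const n).sub hBV).monotone (.of_forall fun ω => sub_nonneg.2 (trunc_le V n ω)))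

theorem IsAbsorptionSG.hasStrongLimitAtZero_iff (hS : IsAbsorptionSG μ p T V S)
    (hR : IsAbsorptionSG μ p T U R) (hT : IsC0Semigroup T) (hTpos : IsPositiveSG T)
    (hε : 0 < ε) (hε1 : ε ≤ 1) (hUV : U ≤ᵐ[μ] V) (hVU : smulRate ε V ≤ᵐ[μ] U)
    {P : Lp ℝ p μ →L[ℝ] Lp ℝ p μ} : HasStrongLimitAtZero S P ↔ HasStrongLimitAtZero R P :=
  (hS.isSandwiched hR hT hTpos hε.le hε1 hUV hVU).hasStrongLimitAtZero_iff hε hε1 hT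
    hS.isSemigroup hR.isSemigroup

end AbsorptionSemigroup

end Lp

end Absorption

/-- For `ε ≥ 1` the roles of `V` and `ε V` are interchanged, since `V = ε⁻¹ (ε V)`. -/
theorem statement15_general {Ω : Type*} [MeasurableSpace Ω] {μ : Measure Ω} {p : ℝ≥0∞}
    [Fact (1 ≤ p)] {T S R : ℝ → Lp ℝ p μ →L[ℝ] Lp ℝ p μ} {V : Ω → ℝ≥0∞} {ε : ℝ}
    {P : Lp ℝ p μ →L[ℝ] Lp ℝ p μ} (hT : IsC0Semigroup T) (hTpos : IsPositiveSG T)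
    (hS : IsAbsorptionSG μ p T V S) (hε : 0 < ε) (hR : IsAbsorptionSG μ p T (smulRate ε V) R) :
    HasStrongLimitAtZero S P ↔ HasStrongLimitAtZero R P := by
  rcases le_total ε 1 with hε1 | hε1
  · exact hS.hasStrongLimitAtZero_iff hR hT hTpos hε hε1
      (.of_forall (smulRate_le_self hε1 V)) (.refl _ _)
  · have hV := smulRate_inv_smulRate hε V
    refine (hR.hasStrongLimitAtZero_iff hS hT hTpos (inv_pos.2 hε) (inv_le_one_of_one_le₀ hε1)
      ?_ (.of_forall hV.le)).symm
    exact .of_forall fun ω => by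
      simpa only [hV] using smulRate_le_self (inv_le_one_of_one_le₀ hε1) (smulRate ε V) ω

/-- For locally measurable `V : Ω → [0,∞]` and every `ε ∈ (0,1]`, the strong
limit `s-lim_{t→0+} T_{εV}(t)` exists and equals the band projection
`P = s-lim_{t→0+} T_V(t)`. -/
theorem statement15
    {Ω : Type*} [MeasurableSpace Ω] (μ : Measure Ω) (p : ℝ≥0∞) [Fact (1 ≤ p)] (hp : p ≠ ∞)
    (T : ℝ → Lp ℝ p μ →L[ℝ] Lp ℝ p μ)
    (hT : IsC0Semigroup T) (hTpos : IsPositiveSG T)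
    (V : Ω → ℝ≥0∞) (hVmeas : LocallyMeasurable μ V)
    -- the one-parameter semigroup `T_V = s-lim_{n→∞} e^{t(A − V∧n)}`
    (TV : ℝ → Lp ℝ p μ →L[ℝ] Lp ℝ p μ)
    (hTV : IsAbsorptionSG μ p T V TV)
    -- the band projection `P = s-lim_{t→0+} T_V(t)`
    (P : Lp ℝ p μ →L[ℝ] Lp ℝ p μ)
    (hP : ∀ f : Lp ℝ p μ, Tendsto (fun t : ℝ => TV t f) (𝓝[>] (0 : ℝ)) (𝓝 (P f)))
    (hPband : IsBandProjection P)
    -- the absorption semigroups `T_{εV}` for `ε ∈ (0,1]`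
    (Sε : ℝ → ℝ → Lp ℝ p μ →L[ℝ] Lp ℝ p μ)
    (hSε : ∀ ε : ℝ, 0 < ε → ε ≤ 1 → IsAbsorptionSG μ p T (smulRate ε V) (Sε ε)) :
    ∀ ε : ℝ, 0 < ε → ε ≤ 1 → ∀ f : Lp ℝ p μ,
      Tendsto (fun t : ℝ => Sε ε t f) (𝓝[>] (0 : ℝ)) (𝓝 (P f)) := by
  intro ε hε hε1
  exact (statement15_general hT hTpos hTV hε (hSε ε hε hε1)).1 hP
end
end

section
/- Let (Ω, 𝒜, μ) be a measure space, p ∈ [1,∞), and T a positive C₀-semigroup on L_p(μ) with generator A. If V : Ω → [0,∞] (or V : Ω → [−∞,0]) is T-admissible, then the strong convergence e^{t(A − (V∧n)∨(−n))} → T_V(t) as n → ∞ is uniform for t in bounded subsets of [0,∞); that is, for every f ∈ L_p(μ) and every b > 0, sup_{0 ≤ t ≤ b} ‖e^{t(A − (V∧n)∨(−n))}f − T_V(t)f‖_p → 0 as n → ∞. -/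
open MeasureTheory Filter Topology ENNReal

noncomputable section

open Absorption

/-!
The generators `A - W` and `A - W'` of two perturbed semigroups `S` and `S'` differ by the bounded
multiplication operator `W - W'`. If `W' ≤ W` and `S` is positive, Duhamel's formula
`S' t f = S t f + ∫₀ᵗ S (t - s) ((W - W') (S' s f)) ds` and Gronwall's inequality for the norm of
the negative part of `S' s f` show that `S'` is positive too, and then, by the same formula, that it
dominates `S`. Hence for `f ≥ 0` the approximants `e^{t(A - W)} f` are monotone in `W`, and Dini's
theorem in the Banach lattice `L_p` makes their pointwise convergence to a continuous limit locally
uniform; a general `f` is the difference of its positive and negative parts.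

That `W f` is a.e. measurable for every `f ∈ L_p` is clear on the dense domain of `A - W`, and
passes to limits along a.e. convergent subsequences.
-/

namespace Absorption

section Calculus

variable {E : Type*} [NormedAddCommGroup E] [NormedSpace ℝ E]

theorem hasDerivWithinAt_Ici_iff_tendsto_slope_zero {u : ℝ → E} {u' : E} {x : ℝ} :
    HasDerivWithinAt u u' (Set.Ici x) x ↔
      Tendsto (fun r : ℝ => r⁻¹ • (u (x + r) - u x)) (𝓝[>] 0) (𝓝 u') := by
  rw [← hasDerivWithinAt_Ioi_iff_Ici, hasDerivWithinAt_iff_tendsto_slope' Set.self_notMem_Ioi]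
  have hmap : map (x + ·) (𝓝[>] 0) = 𝓝[>] x := by simp [map_add_left_nhdsGT]
  rw [← hmap, tendsto_map'_iff]
  simp [Function.comp_def, slope_def_module]

theorem hasDerivWithinAt_integral_Ici [CompleteSpace E] {u : ℝ → E} {a t : ℝ} (hat : a ≤ t)
    (hu : ContinuousOn u (Set.Ici a)) :
    HasDerivWithinAt (fun x => ∫ s in a..x, u s) (u t) (Set.Ici t) t := by
  have hut : ContinuousOn u (Set.Ici t) := hu.mono (Set.Ici_subset_Ici.2 hat)
  exact intervalIntegral.integral_hasDerivWithinAt_right (t := Set.Ioi t)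
    ((hu.mono Set.Icc_subset_Ici_self).intervalIntegrable_of_Icc hat)
    ((hut.mono Set.Ioi_subset_Ici_self).stronglyMeasurableAtFilter_nhdsWithin measurableSet_Ioi t)
    ((hut t Set.self_mem_Ici).mono Set.Ioi_subset_Ici_self)

theorem eq_zero_of_le_mul_integral_s17 {u : ℝ → ℝ} {K b : ℝ} (hu : ContinuousOn u (Set.Ici 0))
    (hu₀ : ∀ t ∈ Set.Icc 0 b, 0 ≤ u t)
    (hle : ∀ t ∈ Set.Icc 0 b, u t ≤ K * ∫ s in (0 : ℝ)..t, u s) {t : ℝ} (ht : t ∈ Set.Icc 0 b) :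
    u t = 0 := by
  have hnonneg : ∀ r ∈ Set.Icc 0 b, 0 ≤ ∫ s in (0 : ℝ)..r, u s := fun r hr =>
    intervalIntegral.integral_nonneg hr.1 fun s hs => hu₀ s ⟨hs.1, hs.2.trans hr.2⟩
  have hcont : ContinuousOn (fun r => ∫ s in (0 : ℝ)..r, u s) (Set.Icc 0 b) := by
    have hint := (hu.mono (Set.Icc_subset_Ici_self : Set.Icc 0 b ⊆ Set.Ici 0)).integrableOn_Icc
      (μ := volume)
    rw [← Set.uIcc_of_le (ht.1.trans ht.2)] at hint ⊢
    exact intervalIntegral.continuousOn_primitive_interval hint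
  have hzero := eq_zero_of_abs_deriv_le_mul_abs_self_of_eq_zero_right hcont
    (fun r hr => hasDerivWithinAt_integral_Ici hr.1 hu) intervalIntegral.integral_same
    (fun r hr => by
      have hr' := Set.Ico_subset_Icc_self hr
      rw [Real.norm_of_nonneg (hu₀ r hr'), Real.norm_of_nonneg (hnonneg r hr')]
      exact hle r hr') t ht
  exact le_antisymm ((hle t ht).trans_eq (by rw [hzero, mul_zero])) (hu₀ t ht)

end Calculus

section Semigroup

variable {E : Type*} [NormedAddCommGroup E] [NormedSpace ℝ E] {T : ℝ → E →L[ℝ] E}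

theorem IsC0Semigroup.zero_apply (hT : IsC0Semigroup T) (f : E) : T 0 f = f := by
  simp [hT.1.1]

theorem IsC0Semigroup.add_apply (hT : IsC0Semigroup T) {s t : ℝ} (hs : 0 ≤ s) (ht : 0 ≤ t)
    (f : E) : T (s + t) f = T s (T t f) := by
  simp [hT.1.2 s t hs ht]

theorem IsC0Semigroup.exists_opNorm_le [CompleteSpace E] (hT : IsC0Semigroup T) (b : ℝ) :
    ∃ M : NNReal, ∀ t ∈ Set.Icc 0 b, ‖T t‖ ≤ M := by
  have hbdd (f : E) : ∃ C, ∀ t : Set.Icc 0 b, ‖T t f‖ ≤ C := by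
    obtain ⟨C, hC⟩ := isCompact_Icc.exists_bound_of_continuousOn
      ((hT.2 f).mono (Set.Icc_subset_Ici_self : Set.Icc 0 b ⊆ Set.Ici 0))
    exact ⟨C, fun t => hC t t.2⟩
  obtain ⟨M, hM⟩ := banach_steinhaus hbdd
  exact ⟨M.toNNReal, fun t ht => (hM ⟨t, ht⟩).trans M.le_coe_toNNReal⟩

theorem IsC0Semigroup.continuousOn_uncurry [CompleteSpace E] (hT : IsC0Semigroup T) (b : ℝ) :
    ContinuousOn (fun q : ℝ × E => T q.1 q.2) (Set.Icc 0 b ×ˢ Set.univ) := by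
  obtain ⟨M, hM⟩ := hT.exists_opNorm_le b
  refine continuousOn_prod_of_continuousOn_lipschitzOnWith' _ M (fun t ht => ?_) fun f _ =>
    (hT.2 f).mono Set.Icc_subset_Ici_self
  exact (ContinuousLinearMap.lipschitzWith_of_opNorm_le (hM t ht)).lipschitzOnWith

theorem IsC0Semigroup.continuousOn_sub_apply [CompleteSpace E] (hT : IsC0Semigroup T) {t : ℝ}
    {u : ℝ → E} (hu : ContinuousOn u (Set.Icc 0 t)) :
    ContinuousOn (fun s => T (t - s) (u s)) (Set.Icc 0 t) :=
  (hT.continuousOn_uncurry t).comp (f := fun s => (t - s, u s))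
    ((continuousOn_const.sub continuousOn_id).prodMk hu)
    fun _ hs => ⟨⟨sub_nonneg.2 hs.2, sub_le_self t hs.1⟩, Set.mem_univ _⟩

theorem IsC0Semigroup.inGenerator_iff_hasDerivWithinAt_s17 (hT : IsC0Semigroup T) {f g : E} :
    InGenerator T f g ↔ HasDerivWithinAt (fun t => T t f) g (Set.Ici 0) 0 := by
  simp [InGenerator, hasDerivWithinAt_Ici_iff_tendsto_slope_zero, hT.zero_apply]

theorem InGenerator.apply_semigroup (hT : IsC0Semigroup T) {f g : E} (hfg : InGenerator T f g)
    {s : ℝ} (hs : 0 ≤ s) : InGenerator T (T s f) (T s g) := by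
  refine (((T s).continuous.tendsto g).comp hfg).congr' ?_
  filter_upwards [self_mem_nhdsWithin] with t (ht : 0 < t)
  have hcomm : T s (T t f) = T t (T s f) := by
    rw [← hT.add_apply hs ht.le, add_comm, hT.add_apply ht.le hs]
  simp [hcomm]

theorem InGenerator.const_smul {f g : E} (hfg : InGenerator T f g) (c : ℝ) :
    InGenerator T (c • f) (c • g) :=
  (Tendsto.const_smul hfg c).congr fun t => by rw [map_smul, ← smul_sub, smul_comm]

theorem IsC0Semigroup.inGenerator_integral_s17 [CompleteSpace E] (hT : IsC0Semigroup T) (f : E)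
    {t : ℝ} (ht : 0 ≤ t) : InGenerator T (∫ s in (0 : ℝ)..t, T s f) (T t f - f) := by
  have hint {a b : ℝ} (ha : 0 ≤ a) (hab : a ≤ b) :
      IntervalIntegrable (fun s => T s f) volume a b :=
    ((hT.2 f).mono fun s hs => ha.trans hs.1).intervalIntegrable_of_Icc hab
  have hslope {a : ℝ} (ha : 0 ≤ a) := hasDerivWithinAt_Ici_iff_tendsto_slope_zero.1
    (hasDerivWithinAt_integral_Ici ha (hT.2 f))
  have hlim := (hslope ht).sub (hslope le_rfl)
  rw [hT.zero_apply] at hlim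
  refine hlim.congr' ?_
  filter_upwards [self_mem_nhdsWithin] with r (hr : 0 < r)
  have hshift : T r (∫ s in (0 : ℝ)..t, T s f) = ∫ s in r..t + r, T s f :=
    calc T r (∫ s in (0 : ℝ)..t, T s f)
        = ∫ s in (0 : ℝ)..t, T r (T s f) :=
          ((T r).intervalIntegral_comp_comm (hint le_rfl ht)).symm
      _ = ∫ s in (0 : ℝ)..t, T (s + r) f := by
          refine intervalIntegral.integral_congr fun s hs => ?_
          rw [Set.uIcc_of_le ht] at hs
          simp only [add_comm s r, hT.add_apply hr.le hs.1]
      _ = ∫ s in r..t + r, T s f := by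
          rw [intervalIntegral.integral_comp_add_right (fun s => T s f), zero_add]
  have hsplit : (∫ s in (0 : ℝ)..t + r, T s f) - ∫ s in (0 : ℝ)..r, T s f
      = ∫ s in r..t + r, T s f :=
    intervalIntegral.integral_interval_sub_left (hint le_rfl (by positivity)) (hint le_rfl hr.le)
  rw [hshift, ← hsplit, ← smul_sub, zero_add, intervalIntegral.integral_same]
  congr 1
  abel

theorem IsC0Semigroup.tendsto_average [CompleteSpace E] (hT : IsC0Semigroup T) (f : E) :
    Tendsto (fun h : ℝ => h⁻¹ • ∫ s in (0 : ℝ)..h, T s f) (𝓝[>] 0) (𝓝 f) := by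
  have hderiv := hasDerivWithinAt_integral_Ici le_rfl (hT.2 f)
  simpa [hT.zero_apply] using hasDerivWithinAt_Ici_iff_tendsto_slope_zero.1 hderiv

theorem IsC0Semigroup.dense_domain_s17 [CompleteSpace E] (hT : IsC0Semigroup T) :
    Dense {f : E | ∃ g, InGenerator T f g} := fun f =>
  mem_closure_of_tendsto (hT.tendsto_average f) <| by
    filter_upwards [self_mem_nhdsWithin] with h (hh : 0 < h)
    exact ⟨_, (hT.inGenerator_integral_s17 f hh.le).const_smul h⁻¹⟩

end Semigroup

section BoundedPerturbation

variable {E : Type*} [NormedAddCommGroup E] [NormedSpace ℝ E] {S T U : ℝ → E →L[ℝ] E}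
  {B C : E →L[ℝ] E}

/-- The generator of `S` is `A + B`, where `A` is the generator of `T` and `B` is bounded. -/
def IsBoundedPerturbation_s17 (T S : ℝ → E →L[ℝ] E) (B : E →L[ℝ] E) : Prop :=
  ∀ f g, InGenerator T f g ↔ InGenerator S f (g + B f)

theorem IsBoundedPerturbation_s17.symm (h : IsBoundedPerturbation_s17 T S B) :
    IsBoundedPerturbation_s17 S T (-B) := fun f g => by
  rw [h f, neg_apply, neg_add_cancel_right]

theorem IsBoundedPerturbation_s17.trans (hTS : IsBoundedPerturbation_s17 T S B)
    (hSU : IsBoundedPerturbation_s17 S U C) : IsBoundedPerturbation_s17 T U (B + C) := fun f g => by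
  rw [hTS, hSU, add_apply, add_assoc]

theorem IsBoundedPerturbation_s17.hasDerivWithinAt_apply [CompleteSpace E]
    (hTS : IsBoundedPerturbation_s17 T S B) (hT : IsC0Semigroup T) (hS : IsC0Semigroup S) {f g : E}
    (hfg : InGenerator S f g) {s t : ℝ} (hs : 0 ≤ s) (hst : s < t) :
    HasDerivWithinAt (fun s => T (t - s) (S s f)) (T (t - s) (B (S s f))) (Set.Ici s) s := by
  rw [hasDerivWithinAt_Ici_iff_tendsto_slope_zero]
  set w := S s f
  have hSw : InGenerator S w (S s g) := hfg.apply_semigroup hS hs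
  have hTw : InGenerator T w (S s g - B w) := by rwa [hTS, sub_add_cancel]
  have hquot : Tendsto (fun r : ℝ => r⁻¹ • (S r w - w) - r⁻¹ • (T r w - w)) (𝓝[>] 0)
      (𝓝 (B w)) := by
    simpa using Tendsto.sub hSw hTw
  have htime : Tendsto (fun r : ℝ => t - s - r) (𝓝[>] 0) (𝓝 (t - s)) := by
    have : Continuous fun r : ℝ => t - s - r := by fun_prop
    exact (this.tendsto' 0 _ (sub_zero _)).mono_left nhdsWithin_le_nhds
  have hsmall : ∀ᶠ r : ℝ in 𝓝[>] 0, r ∈ Set.Ioo 0 (t - s) := Ioo_mem_nhdsGT (sub_pos.2 hst)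
  have hjoint := hT.continuousOn_uncurry t (t - s, B w)
    ⟨⟨(sub_pos.2 hst).le, sub_le_self t hs⟩, Set.mem_univ _⟩
  have hlim := hjoint.tendsto.comp (tendsto_nhdsWithin_iff.2 ⟨htime.prodMk_nhds hquot,
    hsmall.mono fun r hr => ⟨⟨by linarith [hr.2], by linarith [hr.1]⟩, Set.mem_univ _⟩⟩)
  refine hlim.congr' ?_
  filter_upwards [hsmall] with r hr
  have hSr : S (s + r) f = S r w := by rw [add_comm, hS.add_apply hr.1.le hs]
  have hTr : T (t - s) w = T (t - s - r) (T r w) := by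
    rw [← hT.add_apply (sub_pos.2 hr.2).le hr.1.le, sub_add_cancel]
  rw [hSr, hTr, ← sub_sub]
  simp [← smul_sub]

theorem IsBoundedPerturbation_s17.duhamel [CompleteSpace E] (hTS : IsBoundedPerturbation_s17 T S B)
    (hT : IsC0Semigroup T) (hS : IsC0Semigroup S) {f g : E} (hfg : InGenerator S f g) {t : ℝ}
    (ht : 0 ≤ t) : ∫ s in (0 : ℝ)..t, T (t - s) (B (S s f)) = S t f - T t f := by
  have hSf : ContinuousOn (fun s => S s f) (Set.Icc 0 t) :=
    (hS.2 f).mono Set.Icc_subset_Ici_self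
  rw [intervalIntegral.integral_eq_sub_of_hasDeriv_right_of_le ht (hT.continuousOn_sub_apply hSf)
    (fun s hs => (hTS.hasDerivWithinAt_apply hT hS hfg hs.1.le hs.2).Ioi_of_Ici)
    ((hT.continuousOn_sub_apply (B.continuous.comp_continuousOn hSf)).intervalIntegrable_of_Icc ht)]
  simp [hT.zero_apply, hS.zero_apply]

/-- The rescaled semigroup `t ↦ e^{ct} T(t)`, whose generator is `A + c` if that of `T` is `A`. -/
def rescale (c : ℝ) (T : ℝ → E →L[ℝ] E) : ℝ → E →L[ℝ] E := fun t => Real.exp (c * t) • T t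

theorem rescale_neg_rescale (c : ℝ) (T : ℝ → E →L[ℝ] E) : rescale (-c) (rescale c T) = T := by
  funext t
  simp [rescale, smul_smul, ← Real.exp_add]

theorem isC0Semigroup_rescale (hT : IsC0Semigroup T) (c : ℝ) : IsC0Semigroup (rescale c T) := by
  refine ⟨⟨by simp [rescale, hT.1.1], fun s t hs ht => ?_⟩, fun f => ?_⟩
  · ext f
    simp [rescale, hT.add_apply hs ht, mul_add, Real.exp_add, smul_smul, mul_comm]
  · exact ContinuousOn.smul (by fun_prop) (hT.2 f)

theorem inGenerator_rescale (hT : IsC0Semigroup T) (c : ℝ) {f g : E} (hfg : InGenerator T f g) :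
    InGenerator (rescale c T) f (g + c • f) := by
  rw [(isC0Semigroup_rescale hT c).inGenerator_iff_hasDerivWithinAt_s17]
  have hexp : HasDerivAt (fun t : ℝ => Real.exp (c * t)) c 0 := by
    simpa using ((hasDerivAt_id (0 : ℝ)).const_mul c).exp
  refine (hexp.hasDerivWithinAt.smul (hT.inGenerator_iff_hasDerivWithinAt_s17.1 hfg)).congr_deriv ?_
  simp [hT.zero_apply]

theorem isBoundedPerturbation_rescale (hT : IsC0Semigroup T) (c : ℝ) :
    IsBoundedPerturbation_s17 T (rescale c T) (c • ContinuousLinearMap.id ℝ E) := fun f g =>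
  ⟨inGenerator_rescale hT c, fun hfg => by
    simpa [rescale_neg_rescale] using
      inGenerator_rescale (isC0Semigroup_rescale hT c) (-c) hfg⟩

end BoundedPerturbation

section BanachLattice

variable {E : Type*} [NormedAddCommGroup E] [NormedSpace ℝ E]

theorem intervalIntegral_nonneg [PartialOrder E] [IsOrderedAddMonoid E] [IsOrderedModule ℝ E]
    [ClosedIciTopology E] {u : ℝ → E} {a b : ℝ} (hab : a ≤ b) (hu : ∀ s ∈ Set.Icc a b, 0 ≤ u s) :
    0 ≤ ∫ s in a..b, u s := by
  rw [intervalIntegral.integral_of_le hab]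
  refine integral_nonneg_of_ae ((ae_restrict_iff' measurableSet_Ioc).2 ?_)
  exact ae_of_all _ fun s hs => hu s (Set.Ioc_subset_Icc_self hs)

theorem nonneg_subset_closure_domain_of_nonneg [PartialOrder E] [IsOrderedAddMonoid E]
    [IsOrderedModule ℝ E] [ClosedIciTopology E] [CompleteSpace E] {T : ℝ → E →L[ℝ] E}
    (hT : IsC0Semigroup T) (hTpos : ∀ t, 0 ≤ t → ∀ f, 0 ≤ f → 0 ≤ T t f) :
    {f : E | 0 ≤ f} ⊆ closure {f | 0 ≤ f ∧ ∃ g, InGenerator T f g} := fun f hf =>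
  mem_closure_of_tendsto (hT.tendsto_average f) <| by
    filter_upwards [self_mem_nhdsWithin] with h (hh : 0 < h)
    exact ⟨smul_nonneg (inv_nonneg.2 hh.le)
        (intervalIntegral_nonneg hh.le fun s hs => hTpos s hs.1 f hf),
      _, (hT.inGenerator_integral_s17 f hh.le).const_smul h⁻¹⟩

theorem tendstoUniformlyOn_of_forall_nonneg [Lattice E] [IsOrderedAddMonoid E]
    {ι α : Type*} {l : Filter ι} {s : Set α}
    {F : ι → α → E →L[ℝ] E} {G : α → E →L[ℝ] E}
    (h : ∀ f, 0 ≤ f → TendstoUniformlyOn (fun i x => F i x f) (fun x => G x f) l s) (f : E) :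
    TendstoUniformlyOn (fun i x => F i x f) (fun x => G x f) l s := by
  have hsub := (h f⁺ (posPart_nonneg f)).sub (h f⁻ (negPart_nonneg f))
  have hsplit (L : E →L[ℝ] E) : L f⁺ - L f⁻ = L f := by
    rw [← map_sub, posPart_sub_negPart]
  simpa only [Pi.sub_def, hsplit] using hsub

variable [Lattice E] [HasSolidNorm E] [IsOrderedAddMonoid E] [IsOrderedModule ℝ E]
  [CompleteSpace E] {S T : ℝ → E →L[ℝ] E} {B : E →L[ℝ] E}

/-- Dropping `T t f ≥ 0` and the positive part of `S s f` in Duhamel's formula only decreases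
the right-hand side. -/
theorem IsBoundedPerturbation_s17.negPart_le_integral (hTS : IsBoundedPerturbation_s17 T S B)
    (hT : IsC0Semigroup T) (hS : IsC0Semigroup S)
    (hTpos : ∀ t, 0 ≤ t → ∀ f, 0 ≤ f → 0 ≤ T t f) (hB : ∀ f, 0 ≤ f → 0 ≤ B f) {f g : E}
    (hf : 0 ≤ f) (hfg : InGenerator S f g) {t : ℝ} (ht : 0 ≤ t) :
    (S t f)⁻ ≤ ∫ s in (0 : ℝ)..t, T (t - s) (B (S s f)⁻) := by
  have hSf : ContinuousOn (fun s => S s f) (Set.Icc 0 t) :=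
    (hS.2 f).mono Set.Icc_subset_Ici_self
  have hint {u : ℝ → E} (hu : ContinuousOn u (Set.Icc 0 t)) :
      IntervalIntegrable (fun s => T (t - s) (B (u s))) volume 0 t :=
    (hT.continuousOn_sub_apply (B.continuous.comp_continuousOn hu)).intervalIntegrable_of_Icc ht
  have hpos {u : ℝ → E} (hu : ∀ s, 0 ≤ u s) : 0 ≤ ∫ s in (0 : ℝ)..t, T (t - s) (B (u s)) :=
    intervalIntegral_nonneg ht fun s hs => hTpos _ (sub_nonneg.2 hs.2) _ (hB _ (hu s))
  have hparts : (∫ s in (0 : ℝ)..t, T (t - s) (B (S s f)))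
      + ∫ s in (0 : ℝ)..t, T (t - s) (B (S s f)⁻) = ∫ s in (0 : ℝ)..t, T (t - s) (B (S s f)⁺) := by
    rw [← intervalIntegral.integral_add (hint hSf)
      (hint (u := fun s => (S s f)⁻) (continuous_negPart.comp_continuousOn hSf))]
    refine intervalIntegral.integral_congr fun s _ => ?_
    simp only [← map_add, sub_eq_iff_eq_add.1 (posPart_sub_negPart (S s f))]
  refine sup_le ?_ (hpos fun s => negPart_nonneg _)
  rw [neg_le_iff_add_nonneg', ← sub_add_cancel (S t f) (T t f),
    ← hTS.duhamel hT hS hfg ht, add_right_comm, hparts]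
  exact add_nonneg (hpos fun s => posPart_nonneg _) (hTpos t ht f hf)

theorem IsBoundedPerturbation_s17.nonneg_of_inGenerator (hTS : IsBoundedPerturbation_s17 T S B)
    (hT : IsC0Semigroup T) (hS : IsC0Semigroup S)
    (hTpos : ∀ t, 0 ≤ t → ∀ f, 0 ≤ f → 0 ≤ T t f) (hB : ∀ f, 0 ≤ f → 0 ≤ B f) {f g : E}
    (hf : 0 ≤ f) (hfg : InGenerator S f g) {t : ℝ} (ht : 0 ≤ t) : 0 ≤ S t f := by
  obtain ⟨M, hM⟩ := hT.exists_opNorm_le t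
  have hcont : ContinuousOn (fun s => ‖(S s f)⁻‖) (Set.Ici 0) :=
    (continuous_negPart.comp_continuousOn (hS.2 f)).norm
  have hgronwall : ∀ r ∈ Set.Icc 0 t,
      ‖(S r f)⁻‖ ≤ M * ‖B‖ * ∫ s in (0 : ℝ)..r, ‖(S s f)⁻‖ := fun r hr => by
    have hcont' := (hcont.mono (Set.Icc_subset_Ici_self : Set.Icc 0 r ⊆ _)).const_mul (M * ‖B‖)
    calc ‖(S r f)⁻‖ ≤ ‖∫ s in (0 : ℝ)..r, T (r - s) (B (S s f)⁻)‖ :=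
          norm_le_norm_of_abs_le_abs <| abs_le_abs_of_nonneg (negPart_nonneg _)
            (hTS.negPart_le_integral hT hS hTpos hB hf hfg hr.1)
      _ ≤ ∫ s in (0 : ℝ)..r, M * ‖B‖ * ‖(S s f)⁻‖ := by
          refine intervalIntegral.norm_integral_le_of_norm_le hr.1 (ae_of_all _ fun s hs => ?_)
            (hcont'.intervalIntegrable_of_Icc hr.1)
          rw [mul_assoc]
          exact (T (r - s)).le_of_opNorm_le_of_le
            (hM _ ⟨sub_nonneg.2 hs.2, (sub_le_self r hs.1.le).trans hr.2⟩) (B.le_opNorm _)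
      _ = M * ‖B‖ * ∫ s in (0 : ℝ)..r, ‖(S s f)⁻‖ := intervalIntegral.integral_const_mul _ _
  exact negPart_eq_zero.1 <| norm_eq_zero.1 <|
    eq_zero_of_le_mul_integral_s17 hcont (fun _ _ => norm_nonneg _) hgronwall ⟨ht, le_rfl⟩

theorem IsBoundedPerturbation_s17.nonneg (hTS : IsBoundedPerturbation_s17 T S B)
    (hT : IsC0Semigroup T) (hS : IsC0Semigroup S)
    (hTpos : ∀ t, 0 ≤ t → ∀ f, 0 ≤ f → 0 ≤ T t f) (hB : ∀ f, 0 ≤ f → 0 ≤ B f) {t : ℝ}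
    (ht : 0 ≤ t) {f : E} (hf : 0 ≤ f) : 0 ≤ S t f := by
  refine closure_minimal ?_ (isClosed_Ici.preimage (S t).continuous)
    (nonneg_subset_closure_domain_of_nonneg hT hTpos hf)
  rintro x ⟨hx, g, hxg⟩
  exact hTS.nonneg_of_inGenerator hT hS hTpos hB hx ((hTS x g).1 hxg) ht

theorem IsBoundedPerturbation_s17.apply_le_apply (hTS : IsBoundedPerturbation_s17 T S B)
    (hT : IsC0Semigroup T) (hS : IsC0Semigroup S)
    (hTpos : ∀ t, 0 ≤ t → ∀ f, 0 ≤ f → 0 ≤ T t f) (hB : ∀ f, 0 ≤ f → 0 ≤ B f) {t : ℝ}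
    (ht : 0 ≤ t) {f : E} (hf : 0 ≤ f) : T t f ≤ S t f := by
  refine closure_minimal ?_ (isClosed_le (T t).continuous (S t).continuous)
    (nonneg_subset_closure_domain_of_nonneg hT hTpos hf)
  rintro x ⟨hx, g, hxg⟩
  rw [Set.mem_ofPred_eq, ← sub_nonneg, ← hTS.duhamel hT hS ((hTS x g).1 hxg) ht]
  exact intervalIntegral_nonneg ht fun s hs =>
    hTpos _ (sub_nonneg.2 hs.2) _ (hB _ (hTS.nonneg hT hS hTpos hB hs.1 hx))

end BanachLattice

section Lp

variable {Ω : Type*} [MeasurableSpace Ω] {μ : Measure Ω} {p : ℝ≥0∞}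

instance isOrderedModule_Lp : IsOrderedModule ℝ (Lp ℝ p μ) :=
  .of_smul_nonneg fun c hc f hf => by
    rw [← Lp.coeFn_nonneg] at hf ⊢
    filter_upwards [hf, Lp.coeFn_smul c f] with ω hfω hcω
    rw [hcω]
    exact mul_nonneg hc hfω

variable [Fact (1 ≤ p)] {S S₁ S₂ T : ℝ → Lp ℝ p μ →L[ℝ] Lp ℝ p μ} {W W₁ W₂ : Ω → ℝ}
  {M M₁ M₂ : Lp ℝ p μ →L[ℝ] Lp ℝ p μ} {c : ℝ}

/-- The bounded operator `M` on `L_p(μ)` is multiplication by the function `W`. -/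
def IsMulOperator (W : Ω → ℝ) (M : Lp ℝ p μ →L[ℝ] Lp ℝ p μ) : Prop :=
  ∀ f, M f =ᵐ[μ] fun ω => W ω * f ω

theorem exists_isMulOperator (hW : ∀ ω, |W ω| ≤ c)
    (hmeas : ∀ f : Lp ℝ p μ, AEStronglyMeasurable (fun ω => W ω * f ω) μ) :
    ∃ M : Lp ℝ p μ →L[ℝ] Lp ℝ p μ, IsMulOperator W M := by
  have hbound (f : Lp ℝ p μ) (ω : Ω) : ‖W ω * f ω‖ ≤ c * ‖f ω‖ := by
    rw [norm_mul]
    exact mul_le_mul_of_nonneg_right (hW ω) (norm_nonneg _)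
  have hmem (f : Lp ℝ p μ) : MemLp (fun ω => W ω * f ω) p μ :=
    (Lp.memLp f).of_le_mul (hmeas f) (ae_of_all _ (hbound f))
  refine ⟨LinearMap.mkContinuous
    { toFun := fun f => (hmem f).toLp, map_add' := fun f g => ?_, map_smul' := fun a f => ?_ } c
    fun f => Lp.norm_le_mul_norm_of_ae_le_mul ?_, fun f => (hmem f).coeFn_toLp⟩
  · rw [← MemLp.toLp_add, MemLp.toLp_eq_toLp_iff]
    filter_upwards [Lp.coeFn_add f g] with ω hω
    rw [hω, Pi.add_apply, mul_add]
    rfl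
  · rw [RingHom.id_apply, ← MemLp.toLp_const_smul, MemLp.toLp_eq_toLp_iff]
    filter_upwards [Lp.coeFn_smul a f] with ω hω
    simp [hω, mul_left_comm]
  · filter_upwards [(hmem f).coeFn_toLp] with ω hω
    exact (congrArg norm hω).trans_le (hbound f ω)

theorem isMulOperator_const (c : ℝ) :
    IsMulOperator (fun _ => c) (c • ContinuousLinearMap.id ℝ (Lp ℝ p μ)) :=
  fun f => Lp.coeFn_smul c f

theorem IsMulOperator.apply_le_apply (h₁ : IsMulOperator W₁ M₁) (h₂ : IsMulOperator W₂ M₂)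
    (hW : W₁ ≤ W₂) {f : Lp ℝ p μ} (hf : 0 ≤ f) : M₁ f ≤ M₂ f := by
  rw [← Lp.coeFn_le]
  filter_upwards [h₁ f, h₂ f, Lp.coeFn_nonneg f |>.2 hf] with ω hω₁ hω₂ hfω
  rw [hω₁, hω₂]
  exact mul_le_mul_of_nonneg_right (hW ω) hfω

theorem IsMulOperator.isPerturbedSG_iff (hM : IsMulOperator W M) :
    IsPerturbedSG μ p T S W ↔ IsC0Semigroup S ∧ IsBoundedPerturbation_s17 T S (-M) := by
  have hiff (f g g₀ : Lp ℝ p μ) :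
      (g =ᵐ[μ] fun ω => g₀ ω - W ω * f ω) ↔ g₀ = g + M f := by
    rw [← sub_eq_iff_eq_add, eq_comm (a := g₀ - M f), Lp.ext_iff]
    have hsub : ⇑(g₀ - M f) =ᵐ[μ] fun ω => g₀ ω - W ω * f ω := by
      filter_upwards [Lp.coeFn_sub g₀ (M f), hM f] with ω hω hMω
      rw [hω, Pi.sub_apply, hMω]
    exact ⟨fun h => h.trans hsub.symm, fun h => h.trans hsub⟩
  simp only [IsPerturbedSG, IsBoundedPerturbation_s17, hiff, exists_eq_right]
  refine and_congr_right fun _ => ⟨fun h f g => ?_, fun h f g => ?_⟩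
  · rw [h, neg_apply, neg_add_cancel_right]
  · rw [h, neg_apply, add_neg_cancel_right]

theorem isPerturbedSG_rescale (hT : IsC0Semigroup T) (c : ℝ) :
    IsPerturbedSG μ p T (rescale (-c) T) fun _ => c := by
  rw [(isMulOperator_const c).isPerturbedSG_iff, ← neg_smul]
  exact ⟨isC0Semigroup_rescale hT (-c), isBoundedPerturbation_rescale hT (-c)⟩

theorem isClosed_setOf_aestronglyMeasurable_mul (W : Ω → ℝ) :
    IsClosed {f : Lp ℝ p μ | AEStronglyMeasurable (fun ω => W ω * f ω) μ} := by
  refine IsSeqClosed.isClosed fun u f hu huf => ?_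
  obtain ⟨ns, -, hns⟩ := (tendstoInMeasure_of_tendsto_Lp huf).exists_seq_tendsto_ae
  refine aestronglyMeasurable_of_tendsto_ae atTop (fun n => hu (ns n)) ?_
  filter_upwards [hns] with ω hω
  exact hω.const_mul (W ω)

/-- On the domain of its generator, a perturbed semigroup exhibits `W f` as a difference of two
elements of `L_p`. -/
theorem IsPerturbedSG.aestronglyMeasurable_mul_s17 (hS : IsPerturbedSG μ p T S W) (f : Lp ℝ p μ) :
    AEStronglyMeasurable (fun ω => W ω * f ω) μ := by
  refine closure_minimal ?_ (isClosed_setOf_aestronglyMeasurable_mul W) (hS.1.dense_domain_s17 f)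
  rintro x ⟨g, hxg⟩
  obtain ⟨g₀, -, hg⟩ := (hS.2 x g).1 hxg
  refine ((Lp.aestronglyMeasurable g₀).sub (Lp.aestronglyMeasurable g)).congr ?_
  filter_upwards [hg] with ω hω
  simp [hω]

theorem IsPerturbedSG.exists_isMulOperator (hS : IsPerturbedSG μ p T S W)
    (hW : ∃ c, ∀ ω, |W ω| ≤ c) : ∃ M : Lp ℝ p μ →L[ℝ] Lp ℝ p μ, IsMulOperator W M :=
  let ⟨_, hc⟩ := hW
  Absorption.exists_isMulOperator hc hS.aestronglyMeasurable_mul_s17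

theorem IsPerturbedSG.exists_isBoundedPerturbation_of_le (hS₁ : IsPerturbedSG μ p T S₁ W₁)
    (hS₂ : IsPerturbedSG μ p T S₂ W₂) (hW₁ : ∃ c, ∀ ω, |W₁ ω| ≤ c) (hW₂ : ∃ c, ∀ ω, |W₂ ω| ≤ c)
    (hle : W₂ ≤ W₁) : ∃ B, IsBoundedPerturbation_s17 S₁ S₂ B ∧ ∀ f, 0 ≤ f → 0 ≤ B f := by
  obtain ⟨M₁, hM₁⟩ := hS₁.exists_isMulOperator hW₁
  obtain ⟨M₂, hM₂⟩ := hS₂.exists_isMulOperator hW₂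
  refine ⟨- -M₁ + -M₂, (hM₁.isPerturbedSG_iff.1 hS₁).2.symm.trans
    (hM₂.isPerturbedSG_iff.1 hS₂).2, fun f hf => ?_⟩
  simpa using hM₂.apply_le_apply hM₁ hle hf

theorem IsPerturbedSG.apply_le_apply (hS₁ : IsPerturbedSG μ p T S₁ W₁)
    (hS₂ : IsPerturbedSG μ p T S₂ W₂) (hW₁ : ∃ c, ∀ ω, |W₁ ω| ≤ c) (hW₂ : ∃ c, ∀ ω, |W₂ ω| ≤ c)
    (hle : W₂ ≤ W₁) (hpos : IsPositiveSG S₁) {t : ℝ} (ht : 0 ≤ t) {f : Lp ℝ p μ} (hf : 0 ≤ f) :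
    S₁ t f ≤ S₂ t f := by
  obtain ⟨B, hB, hBpos⟩ := hS₁.exists_isBoundedPerturbation_of_le hS₂ hW₁ hW₂ hle
  exact hB.apply_le_apply hS₁.1 hS₂.1 hpos hBpos ht hf

/-- If `W ≤ c`, then `e^{t(A - W)}` dominates the positive semigroup `e^{-ct} T(t)`. -/
theorem IsPerturbedSG.isPositiveSG (hS : IsPerturbedSG μ p T S W) (hW : ∃ c, ∀ ω, |W ω| ≤ c)
    (hT : IsC0Semigroup T) (hTpos : IsPositiveSG T) : IsPositiveSG S := fun t ht f hf => by
  obtain ⟨c, hc⟩ := hW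
  refine (smul_nonneg (Real.exp_pos _).le (hTpos t ht f hf)).trans
    ((isPerturbedSG_rescale hT c).apply_le_apply hS ⟨|c|, fun _ => le_rfl⟩ ⟨c, hc⟩
      (fun ω => (le_abs_self _).trans (hc ω)) ?_ ht hf)
  exact fun s hs g hg => smul_nonneg (Real.exp_pos _).le (hTpos s hs g hg)

end Lp

section Truncation

variable {Ω : Type*} {V : Ω → EReal}

theorem coe_truncE (V : Ω → EReal) (n : ℕ) (ω : Ω) :
    (truncE V n ω : EReal) = max (min (V ω) n) (-n) := by
  refine EReal.coe_toReal (ne_of_lt ?_) (ne_of_gt ?_)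
  · exact max_lt ((min_le_right _ _).trans_lt (EReal.coe_lt_top n)) (EReal.coe_lt_top (-n))
  · exact (EReal.bot_lt_coe (-n)).trans_le (le_max_right _ _)

theorem abs_truncE_le (V : Ω → EReal) (n : ℕ) (ω : Ω) : |truncE V n ω| ≤ n := by
  have hneg : (-n : EReal) ≤ n := (EReal.neg_le_zero.2 n.cast_nonneg').trans n.cast_nonneg'
  have hcoe := coe_truncE V n ω
  rw [abs_le]
  exact ⟨EReal.coe_le_coe_iff.1 <| (le_max_right _ _).trans_eq hcoe.symm,
    EReal.coe_le_coe_iff.1 <| hcoe.trans_le <| max_le (min_le_right _ _) hneg⟩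

theorem monotone_truncE (hV : ∀ ω, 0 ≤ V ω) : Monotone (truncE V) := fun m n hmn ω => by
  have hpos (k : ℕ) : (-k : EReal) ≤ min (V ω) k :=
    (EReal.neg_le_zero.2 k.cast_nonneg').trans (le_min (hV ω) k.cast_nonneg')
  rw [← EReal.coe_le_coe_iff, coe_truncE, coe_truncE, max_eq_left (hpos m), max_eq_left (hpos n)]
  exact min_le_min_left _ (mod_cast hmn)

theorem antitone_truncE (hV : ∀ ω, V ω ≤ 0) : Antitone (truncE V) := fun m n hmn ω => by
  have hle (k : ℕ) : V ω ≤ k := (hV ω).trans k.cast_nonneg'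
  rw [← EReal.coe_le_coe_iff, coe_truncE, coe_truncE, min_eq_left (hle m), min_eq_left (hle n)]
  exact max_le_max_left _ (EReal.neg_le_neg_iff.2 (mod_cast hmn))

end Truncation

end Absorption

theorem statement17_general
    {Ω : Type*} [MeasurableSpace Ω] (μ : Measure Ω) (p : ℝ≥0∞) [Fact (1 ≤ p)]
    {ι : Type*} [Preorder ι] (T : ℝ → Lp ℝ p μ →L[ℝ] Lp ℝ p μ)
    (hT : IsC0Semigroup T) (hTpos : IsPositiveSG T)
    (W : ι → Ω → ℝ) (hWmono : Monotone W ∨ Antitone W) (hWbdd : ∀ i, ∃ c, ∀ ω, |W i ω| ≤ c)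
    (S : ι → ℝ → Lp ℝ p μ →L[ℝ] Lp ℝ p μ) (hS : ∀ i, IsPerturbedSG μ p T (S i) (W i))
    (TV : ℝ → Lp ℝ p μ →L[ℝ] Lp ℝ p μ)
    (hTV : ∀ t : ℝ, 0 ≤ t → ∀ f : Lp ℝ p μ, Tendsto (fun i => S i t f) atTop (𝓝 (TV t f)))
    (hTVcont : ∀ f : Lp ℝ p μ, ContinuousOn (fun t => TV t f) (Set.Ici 0))
    (f : Lp ℝ p μ) (b : ℝ) :
    TendstoUniformlyOn (fun i t => S i t f) (fun t => TV t f) atTop (Set.Icc 0 b) := by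
  refine tendstoUniformlyOn_of_forall_nonneg (fun f hf => ?_) f
  have hcont (i : ι) := ((hS i).1.2 f).mono (Set.Icc_subset_Ici_self : Set.Icc 0 b ⊆ _)
  have hTVf := (hTVcont f).mono (Set.Icc_subset_Ici_self : Set.Icc 0 b ⊆ _)
  have hlim : ∀ t ∈ Set.Icc 0 b, Tendsto (fun i => S i t f) atTop (𝓝 (TV t f)) :=
    fun t ht => hTV t ht.1 f
  have hcompare {i j : ι} (hle : W j ≤ W i) : ∀ t ∈ Set.Icc 0 b, S i t f ≤ S j t f := fun t ht =>
    (hS i).apply_le_apply (hS j) (hWbdd i) (hWbdd j) hle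
      ((hS i).isPositiveSG (hWbdd i) hT hTpos) ht.1 hf
  rcases hWmono with hW | hW
  · exact Antitone.tendstoUniformlyOn_of_forall_tendsto isCompact_Icc hcont
      (fun t ht _ _ hij => hcompare (hW hij) t ht) hTVf hlim
  · exact Monotone.tendstoUniformlyOn_of_forall_tendsto isCompact_Icc hcont
      (fun t ht _ _ hij => hcompare (hW hij) t ht) hTVf hlim

/-- If `V : Ω → [0,∞]` (or `V : Ω → [−∞,0]`) is `T`-admissible, then the
strong convergence `e^{t(A − (V∧n)∨(−n))} → T_V(t)` as `n → ∞` is uniform for `t` in bounded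
subsets of `[0,∞)`: for every `f ∈ L_p(μ)` and `b > 0`,
`sup_{0 ≤ t ≤ b} ‖e^{t(A − (V∧n)∨(−n))}f − T_V(t)f‖ → 0`. -/
theorem statement17
    {Ω : Type*} [MeasurableSpace Ω] (μ : Measure Ω) (p : ℝ≥0∞) [Fact (1 ≤ p)] (hp : p ≠ ∞)
    (T : ℝ → Lp ℝ p μ →L[ℝ] Lp ℝ p μ)
    (hT : IsC0Semigroup T) (hTpos : IsPositiveSG T)
    (V : Ω → EReal) (hVsign : (∀ ω, 0 ≤ V ω) ∨ (∀ ω, V ω ≤ 0))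
    (hVmeas : LocallyMeasurable μ V)
    -- the perturbed semigroups `e^{t(A − (V∧n)∨(−n))}`
    (S : ℕ → ℝ → Lp ℝ p μ →L[ℝ] Lp ℝ p μ)
    (hS : ∀ n : ℕ, IsPerturbedSG μ p T (S n) (truncE V n))
    -- `V` is `T`-admissible: the strong limits exist and `T_V` is a `C₀`-semigroup
    (TV : ℝ → Lp ℝ p μ →L[ℝ] Lp ℝ p μ)
    (hTV : ∀ t : ℝ, 0 ≤ t → ∀ f : Lp ℝ p μ,
      Tendsto (fun n : ℕ => S n t f) atTop (𝓝 (TV t f)))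
    (hTVC0 : IsC0Semigroup TV) :
    -- the convergence is uniform for `t` in bounded subsets of `[0,∞)`
    ∀ f : Lp ℝ p μ, ∀ b : ℝ, 0 < b →
      TendstoUniformlyOn (fun (n : ℕ) (t : ℝ) => S n t f) (fun t : ℝ => TV t f) atTop
        (Set.Icc (0 : ℝ) b) := by
  exact fun f b _ => statement17_general μ p T hT hTpos (truncE V)
    (hVsign.imp monotone_truncE antitone_truncE) (fun n => ⟨n, abs_truncE_le V n⟩) S hS TV hTV
    hTVC0.2 f b
end
end
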